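/- arXiv:1911.06450 — 8 statements merged into one kernel-verified Lean document; each statement's English description precedes it below -/
import Mathlib

section
/- Consider a SISO networked relative coupling system with subsystem matrices A ∈ ℝ^{n×n}, b ∈ ℝ^{n×1}, c ∈ ℝ^{1×n} (n ≥ 1), a digraph G_sys on vertices {1,…,N} without self-loops, and a driving set I_u ⊆ {1,…,N} with |I_u| < N. Then the system is structurally controllable (i.e., there exists a weight vector w ∈ ℝ^{|E|} such that the pair (I_N ⊗ A − L(w) ⊗ (b c), Δ ⊗ b) is controllable) if and only if: (1) (A, b) is controllable and (A, c) is observable, and (2) the network is globally input-reachable. -/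
open Matrix
open scoped Kronecker

noncomputable section

/-- Kalman-matrix controllability of the pair `(M, Q)`. -/
def IsCtrb {R : Type*} [CommRing R] {ι κ : Type*} [Fintype ι] [Fintype κ] [DecidableEq ι]
    (M : Matrix ι ι R) (Q : Matrix ι κ R) : Prop :=
  (Matrix.of fun (i : ι) (jk : Fin (Fintype.card ι) × κ) =>
      (M ^ (jk.1 : ℕ) * Q) i jk.2).rank = Fintype.card ι

/-- Observability of `(M, c)`: controllability of `(Mᵀ, cᵀ)`. -/
def IsObsv {R : Type*} [CommRing R] {ι : Type*} [Fintype ι] [DecidableEq ι]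
    (M : Matrix ι ι R) (c : Matrix (Fin 1) ι R) : Prop :=
  IsCtrb Mᵀ cᵀ

/-- The weighted Laplacian of a digraph with edge set `E`:
`L(w)_{ij} = -w_{(j,i)}` for `i ≠ j` with `(j,i) ∈ E`, zero for other off-diagonal entries,
and diagonal entries making every row sum to zero. -/
def lapMat {R : Type*} [CommRing R] {N : ℕ} (E : Finset (Fin N × Fin N))
    (w : Fin N × Fin N → R) : Matrix (Fin N) (Fin N) R :=
  Matrix.of fun i j =>
    if i = j then ∑ k ∈ Finset.univ.filter (fun k => k ≠ i ∧ (k, i) ∈ E), w (k, i)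
    else if (j, i) ∈ E then -w (j, i) else 0

/-- The `N × |I_u|` matrix whose columns are the standard basis vectors `e_i`, `i ∈ I_u`. -/
def deltaMat {R : Type*} [CommRing R] {N : ℕ} (Iu : Finset (Fin N)) :
    Matrix (Fin N) {i // i ∈ Iu} R :=
  Matrix.of fun i j => if i = (j : Fin N) then 1 else 0

/-- Vertex `i` is reachable by a directed path (possibly of length zero) from a driving vertex. -/
def inputReachable {N : ℕ} (E : Finset (Fin N × Fin N)) (Iu : Finset (Fin N)) (i : Fin N) : Prop :=
  ∃ s ∈ Iu, Relation.ReflTransGen (fun a b => (a, b) ∈ E) s i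

theorem isCtrb_iff_vecMul {K : Type*} [Field K] {ι κ : Type*} [Fintype ι] [Fintype κ]
    [DecidableEq ι] (M : Matrix ι ι K) (Q : Matrix ι κ K) :
    IsCtrb M Q ↔ ∀ y : ι → K, (∀ k : ℕ, y ᵥ* (M ^ k * Q) = 0) → y = 0 := by
  have hrank : IsCtrb M Q ↔ ∀ y : ι → K,
      (∀ k : ℕ, k < Fintype.card ι → y ᵥ* (M ^ k * Q) = 0) → y = 0 := by
    unfold IsCtrb
    set P : Matrix ι (Fin (Fintype.card ι) × κ) K := Matrix.of fun i jk =>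
      (M ^ (jk.1 : ℕ) * Q) i jk.2 with hP
    have hli : P.rank = Fintype.card ι ↔ LinearIndependent K P.row := by
      refine ⟨fun h => ?_, fun h => h.rank_matrix⟩
      exact linearIndependent_iff_card_eq_finrank_span.2
        (h.symm.trans P.rank_eq_finrank_span_row)
    rw [hli, ← vecMul_injective_iff]
    have hker : ∀ y : ι → K, y ᵥ* P = 0 ↔
        ∀ k : ℕ, k < Fintype.card ι → y ᵥ* (M ^ k * Q) = 0 := by
      intro y
      constructor
      · intro h k hk
        ext q
        exact congrFun h (⟨k, hk⟩, q)
      · intro h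
        ext ⟨k, q⟩
        exact congrFun (h k k.2) q
    constructor
    · intro h y hy
      exact h (by simpa using (hker y).2 hy)
    · intro h
      exact (injective_iff_map_eq_zero P.vecMulLinear).2 fun y hy => h y ((hker y).1 hy)
  rw [hrank]
  refine forall_congr' fun y => imp_congr_left ⟨fun h k => ?_, fun h k _ => h k⟩
  rcases isEmpty_or_nonempty ι with hι | hι
  · ext q
    simp [vecMul, dotProduct]
  rw [M.pow_eq_aeval_mod_charpoly k, Polynomial.aeval_eq_sum_range' (n := Fintype.card ι),
    Matrix.sum_mul, vecMul_sum]
  · refine Finset.sum_eq_zero fun i hi => ?_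
    rw [smul_mul, vecMul_smul, h i (Finset.mem_range.1 hi), smul_zero]
  · rw [← M.charpoly_natDegree_eq_dim]
    refine Polynomial.natDegree_modByMonic_lt _ M.charpoly_monic fun h1 => ?_
    have := M.charpoly_natDegree_eq_dim
    rw [h1, Polynomial.natDegree_one] at this
    exact Fintype.card_ne_zero this.symm

/-- The Popov–Belevitch–Hautus eigenvector property of the complex pair `(M, Q)`. -/
def IsPBH {ι κ : Type*} [Fintype ι] (M : Matrix ι ι ℂ) (Q : Matrix ι κ ℂ) : Prop :=
  ∀ (μ : ℂ) (y : ι → ℂ), y ᵥ* M = μ • y → y ᵥ* Q = 0 → y = 0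

theorem isCtrb_iff_isPBH {ι κ : Type*} [Fintype ι] [Fintype κ] [DecidableEq ι]
    (M : Matrix ι ι ℝ) (Q : Matrix ι κ ℝ) :
    IsCtrb M Q ↔ IsPBH (M.map Complex.ofRealHom) (Q.map Complex.ofRealHom) := by
  rw [isCtrb_iff_vecMul]
  have hmap : ∀ k : ℕ, M.map Complex.ofRealHom ^ k * Q.map Complex.ofRealHom =
      (M ^ k * Q).map Complex.ofRealHom := by
    intro k
    rw [Matrix.map_mul, Matrix.map_pow]
  constructor
  · intro h μ y hy hyQ
    have hk : ∀ k : ℕ, y ᵥ* (M ^ k * Q).map Complex.ofRealHom = 0 := by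
      intro k
      rw [← hmap]
      induction k with
      | zero => simpa using hyQ
      | succ k ih =>
        rw [pow_succ', Matrix.mul_assoc, ← vecMul_vecMul, hy, smul_vecMul, ih, smul_zero]
    have hre : (fun i => (y i).re) = 0 := by
      refine h _ fun k => ?_
      ext q
      simpa [vecMul, dotProduct] using congrArg Complex.re (congrFun (hk k) q)
    have him : (fun i => (y i).im) = 0 := by
      refine h _ fun k => ?_
      ext q
      simpa [vecMul, dotProduct] using congrArg Complex.im (congrFun (hk k) q)
    ext i
    exact Complex.ext (congrFun hre i) (congrFun him i)
  · intro h y hy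
    by_contra hne
    set Mc := M.map Complex.ofRealHom
    set Qc := Q.map Complex.ofRealHom
    let U : Submodule ℂ (ι → ℂ) := ⨅ k : ℕ, LinearMap.ker (Mc ^ k * Qc).vecMulLinear
    have hU : ∀ z, z ∈ U ↔ ∀ k : ℕ, z ᵥ* (Mc ^ k * Qc) = 0 := by
      intro z
      simp [U, Submodule.mem_iInf]
    have hinv : ∀ z ∈ U, Mc.vecMulLinear z ∈ U := by
      intro z hz
      rw [hU] at hz ⊢
      intro k
      rw [vecMulLinear_apply, vecMul_vecMul, ← Matrix.mul_assoc, ← pow_succ']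
      exact hz (k + 1)
    have hyU : (fun i => (y i : ℂ)) ∈ U := by
      rw [hU]
      intro k
      rw [hmap]
      ext q
      simpa [vecMul, dotProduct] using congrArg Complex.ofReal (congrFun (hy k) q)
    have : Nontrivial U := by
      refine ⟨⟨⟨_, hyU⟩, 0, fun h0 => hne ?_⟩⟩
      ext i
      simpa using congrFun (congrArg Subtype.val h0) i
    obtain ⟨μ, hμ⟩ := Module.End.exists_eigenvalue (Mc.vecMulLinear.restrict hinv)
    obtain ⟨z, hz⟩ := hμ.exists_hasEigenvector
    have hz0 : (z : ι → ℂ) = 0 := by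
      refine h μ z (congrArg Subtype.val hz.apply_eq_smul) ?_
      simpa using (hU z).1 z.2 0
    exact hz.2 (Subtype.ext hz0)

theorem isPBH_kronecker_iff {ι ν κ l : Type*} [Fintype ι] [Fintype ν] [DecidableEq ι]
    [Fintype l]
    (A : Matrix ν ν ℂ) (b : Matrix ν l ℂ) (c : Matrix l ν ℂ)
    (L : Matrix ι ι ℂ) (D : Matrix ι κ ℂ) :
    IsPBH ((1 : Matrix ι ι ℂ) ⊗ₖ A - L ⊗ₖ (b * c)) (D ⊗ₖ b) ↔
      ∀ (μ : ℂ) (Y : Matrix ι ν ℂ),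
        Y * A = μ • Y + Lᵀ * (Y * b) * c → Dᵀ * (Y * b) = 0 → Y = 0 := by
  unfold IsPBH
  refine forall_congr' fun μ => ?_
  have key : ∀ Y : Matrix ι ν ℂ,
      ((vec Yᵀ ᵥ* ((1 : Matrix ι ι ℂ) ⊗ₖ A - L ⊗ₖ (b * c)) = μ • vec Yᵀ) ↔
        Y * A = μ • Y + Lᵀ * (Y * b) * c) ∧
      (vec Yᵀ ᵥ* (D ⊗ₖ b) = 0 ↔ Dᵀ * (Y * b) = 0) ∧ (vec Yᵀ = 0 ↔ Y = 0) := by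
    intro Y
    refine ⟨?_, ?_, ?_⟩
    · rw [vecMul_sub, vec_vecMul_kronecker, vec_vecMul_kronecker, ← vec_sub, ← vec_smul, vec_inj,
        ← transpose_inj, transpose_sub, sub_eq_iff_eq_add]
      simp [transpose_mul, Matrix.mul_assoc]
    · rw [vec_vecMul_kronecker, vec_eq_zero_iff, ← transpose_inj]
      simp [transpose_mul, Matrix.mul_assoc]
    · simp
  constructor
  · intro h Y h1 h2
    exact (key Y).2.2.1 (h _ ((key Y).1.2 h1) ((key Y).2.1.2 h2))
  · intro h y
    obtain ⟨Z, rfl⟩ := vec_bijective.2 y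
    rw [← transpose_transpose Z]
    intro h1 h2
    exact (key _).2.2.2 (h _ ((key _).1.1 h1) ((key _).2.1.1 h2))

theorem IsPBH.kronecker {ι ν κ : Type*} [Fintype ι] [Fintype ν] [DecidableEq ι] [DecidableEq ν]
    {A : Matrix ν ν ℂ} {b : Matrix ν (Fin 1) ℂ} {c : Matrix (Fin 1) ν ℂ}
    {L : Matrix ι ι ℂ} {D : Matrix ι κ ℂ} (hAb : IsPBH A b) (hAc : IsPBH Aᵀ cᵀ) (hL : IsPBH L D) :
    IsPBH ((1 : Matrix ι ι ℂ) ⊗ₖ A - L ⊗ₖ (b * c)) (D ⊗ₖ b) := by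
  rw [isPBH_kronecker_iff]
  intro μ Y hY hD
  set a : ι → ℂ := fun i => (Y * b) i 0 with ha
  set β : ι → ℂ := a ᵥ* L with hβ
  have hrow : ∀ i, Y i ᵥ* A = μ • Y i + β i • c 0 := by
    intro i
    ext q
    have := congrFun (congrFun hY i) q
    rw [mul_apply_eq_vecMul] at this
    rw [this]
    simp [Matrix.mul_apply, hβ, ha, vecMul, dotProduct, mul_comm]
  have haD : a ᵥ* D = 0 := by
    ext k
    have := congrFun (congrFun hD k) 0
    rw [Matrix.mul_apply] at this
    simpa [vecMul, dotProduct, ha, mul_comm] using this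
  have hYb : ∀ i, a i = 0 → Y i ᵥ* b = 0 := by
    intro i hi
    ext q
    rw [Subsingleton.elim q 0, ← mul_apply_eq_vecMul]
    exact hi
  by_cases hβ0 : β = 0
  · have ha0 : a = 0 := hL 0 a (by rw [← hβ, hβ0, zero_smul]) haD
    funext i
    refine hAb μ (Y i) ?_ (hYb i (congrFun ha0 i))
    rw [hrow, hβ0]
    simp
  exfalso
  obtain ⟨i, hi⟩ := Function.ne_iff.1 hβ0
  have hreg : ∀ z : ν → ℂ, z ᵥ* A = μ • z → z = 0 := by
    intro z hz
    by_contra hz0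
    have hdet : (A - μ • (1 : Matrix ν ν ℂ)).det = 0 :=
      exists_vecMul_eq_zero_iff.1 ⟨z, hz0, by
        rw [vecMul_sub, hz, vecMul_smul, vecMul_one, sub_self]⟩
    obtain ⟨v, hv0, hv⟩ := exists_mulVec_eq_zero_iff.2 hdet
    have hAv : A *ᵥ v = μ • v := by
      rw [sub_mulVec, smul_mulVec, one_mulVec, sub_eq_zero] at hv
      exact hv
    have hcv : c 0 ⬝ᵥ v = 0 := by
      have h1 : (Y i ᵥ* A) ⬝ᵥ v = Y i ⬝ᵥ (A *ᵥ v) := (dotProduct_mulVec _ _ _).symm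
      rw [hrow, hAv, add_dotProduct, smul_dotProduct, smul_dotProduct, dotProduct_smul,
        add_eq_left, smul_eq_mul] at h1
      exact (mul_eq_zero.1 h1).resolve_left hi
    refine hv0 (hAc μ v (by rw [vecMul_transpose, hAv]) ?_)
    ext q
    rw [Subsingleton.elim q 0, vecMul_transpose]
    exact hcv
  have hprop : ∀ j, β i • Y j = β j • Y i := by
    intro j
    refine sub_eq_zero.1 (hreg _ ?_)
    rw [sub_vecMul, smul_vecMul, smul_vecMul, hrow, hrow]
    ext q
    simp
    ring
  have hpa : ∀ j, β i * a j = β j * a i := by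
    intro j
    have := congrArg (fun z => (z ᵥ* b) 0) (hprop j)
    simpa [smul_vecMul, ha, mul_apply_eq_vecMul] using this
  have ha0 : a ≠ 0 := fun h => hβ0 (by rw [hβ, h, zero_vecMul])
  by_cases hai : a i = 0
  · refine ha0 (funext fun j => ?_)
    have := hpa j
    rw [hai, mul_zero] at this
    exact (mul_eq_zero.1 this).resolve_left hi
  · refine ha0 (hL (β i / a i) a (funext fun j => ?_) haD)
    rw [Pi.smul_apply, smul_eq_mul, ← hβ, div_mul_eq_mul_div, hpa, mul_div_cancel_right₀ _ hai]

theorem exists_depth_parent {N : ℕ} {E : Finset (Fin N × Fin N)} {Iu : Finset (Fin N)}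
    (h : ∀ i, inputReachable E Iu i) :
    ∃ (d : Fin N → ℕ) (p : Fin N → Fin N), ∀ i ∉ Iu, (p i, i) ∈ E ∧ d i = d (p i) + 1 := by
  classical
  let R : ℕ → Fin N → Prop := fun m =>
    Nat.rec (motive := fun _ => Fin N → Prop) (fun i => i ∈ Iu) (fun _ S i => ∃ p, S p ∧ (p, i) ∈ E) m
  have hR : ∀ i, ∃ m, R m i := by
    intro i
    obtain ⟨s, hs, hsi⟩ := h i
    induction hsi with
    | refl => exact ⟨0, hs⟩
    | tail _ hE ih =>
      obtain ⟨m, hm⟩ := ih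
      exact ⟨m + 1, _, hm, hE⟩
  let d : Fin N → ℕ := fun i => Nat.find (hR i)
  have hd : ∀ i, ∃ p, i ∉ Iu → (p, i) ∈ E ∧ d i = d p + 1 := by
    intro i
    by_cases hi : i ∈ Iu
    · exact ⟨i, fun h => absurd hi h⟩
    have hspec : R (d i) i := Nat.find_spec (hR i)
    rcases hdi : d i with _ | m
    · rw [hdi] at hspec
      exact absurd hspec hi
    · rw [hdi] at hspec
      obtain ⟨p, hp, hpi⟩ := hspec
      refine ⟨p, fun _ => ⟨hpi, ?_⟩⟩
      have h1 : d p ≤ m := Nat.find_min' (hR p) hp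
      have h2 : d i ≤ d p + 1 := Nat.find_min' (hR i) ⟨p, Nat.find_spec (hR p), hpi⟩
      omega
  choose p hp using hd
  exact ⟨d, p, hp⟩

/-- Eigenvectors of a weighted forest Laplacian with distinct nonzero weights cannot vanish
at all the roots. -/
theorem eq_zero_of_forest {ι : Type*} [Fintype ι] [DecidableEq ι] (Iu : Finset ι)
    (d : ι → ℕ) (p : ι → ι) (hd : ∀ i ∉ Iu, d i = d (p i) + 1) (ω : ι → ℂ)
    (hω : Function.Injective ω) (hω0 : ∀ i, ω i ≠ 0) (μ : ℂ) (γ : ι → ℂ)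
    (hroot : ∀ i ∈ Iu, γ i = 0)
    (heq : ∀ j ∉ Iu, (ω j - μ) * γ j = ∑ k ∈ Finset.univ.filter (fun k => k ∉ Iu ∧ p k = j),
      ω k * γ k)
    (heq0 : ∀ j ∈ Iu, ∑ k ∈ Finset.univ.filter (fun k => k ∉ Iu ∧ p k = j), ω k * γ k = 0) :
    γ = 0 := by
  by_contra hne
  set S := Finset.univ.filter fun i => γ i ≠ 0 with hS
  have hmem : ∀ i, i ∈ S ↔ γ i ≠ 0 := by simp [hS]
  have hSne : S.Nonempty := by
    obtain ⟨i, hi⟩ := Function.ne_iff.1 hne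
    exact ⟨i, (hmem i).2 hi⟩
  have hSI : ∀ i ∈ S, i ∉ Iu := fun i hi hI => (hmem i).1 hi (hroot i hI)
  have hchild : ∀ j ∈ S, ω j ≠ μ → ∃ k ∈ S, p k = j := by
    intro j hj hjμ
    have h1 : (ω j - μ) * γ j ≠ 0 := mul_ne_zero (sub_ne_zero.2 hjμ) ((hmem j).1 hj)
    rw [heq j (hSI j hj)] at h1
    obtain ⟨k, hk, hk0⟩ := Finset.exists_ne_zero_of_sum_ne_zero h1
    exact ⟨k, (hmem k).2 (right_ne_zero_of_mul hk0), (Finset.mem_filter.1 hk).2.2⟩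
  obtain ⟨i, hiS, himax⟩ := S.exists_max_image d hSne
  have hiμ : ω i = μ := by
    by_contra h
    obtain ⟨k, hk, hki⟩ := hchild i hiS h
    have := hd k (hSI k hk)
    have := himax k hk
    rw [hki] at *
    omega
  have hchild' : ∀ j ∈ S, j ≠ i → ∃ k ∈ S, p k = j := fun j hj hji =>
    hchild j hj fun h => hji (hω (h.trans hiμ.symm))
  have huniq : ∀ m : ℕ, ∀ j ∈ S, ∀ j' ∈ S, d i - d j = m → d j = d j' → j = j' := by
    intro m
    induction m with
    | zero =>
      have hdeep : ∀ j ∈ S, d i - d j = 0 → j = i := by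
        intro j hj h0
        by_contra hji
        obtain ⟨k, hk, hkj⟩ := hchild' j hj hji
        have h1 := hd k (hSI k hk)
        have h2 := himax k hk
        rw [hkj] at h1
        omega
      intro j hj j' hj' h0 hjj
      rw [hdeep j hj h0, hdeep j' hj' (hjj ▸ h0)]
    | succ m ih =>
      intro j hj j' hj' h0 hjj
      have hji : j ≠ i := by rintro rfl; omega
      have hji' : j' ≠ i := by rintro rfl; omega
      obtain ⟨k, hk, hkj⟩ := hchild' j hj hji
      obtain ⟨k', hk', hkj'⟩ := hchild' j' hj' hji'
      have h1 := hd k (hSI k hk)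
      have h1' := hd k' (hSI k' hk')
      rw [hkj] at h1
      rw [hkj'] at h1'
      rw [← hkj, ← hkj', ih k hk k' hk' (by omega) (by omega)]
  obtain ⟨j, hjS, hjmin⟩ := S.exists_min_image d hSne
  have hdj := hd j (hSI j hjS)
  have hpj : γ (p j) = 0 := by
    by_contra h
    have := hjmin (p j) ((hmem _).2 h)
    omega
  have hsum : ∑ k ∈ Finset.univ.filter (fun k => k ∉ Iu ∧ p k = p j), ω k * γ k = 0 := by
    by_cases hI : p j ∈ Iu
    · exact heq0 _ hI
    · rw [← heq _ hI, hpj, mul_zero]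
  rw [Finset.sum_eq_single j] at hsum
  · exact mul_ne_zero (hω0 j) ((hmem j).1 hjS) hsum
  · intro k hk hkj
    obtain ⟨hkI, hkp⟩ := (Finset.mem_filter.1 hk).2
    have hdk := hd k hkI
    rw [hkp, ← hdj] at hdk
    by_cases hγ : γ k = 0
    · rw [hγ, mul_zero]
    · exact absurd (huniq _ k ((hmem k).2 hγ) j hjS rfl hdk) hkj
  · intro h
    exact absurd (Finset.mem_filter.2 ⟨Finset.mem_univ _, hSI j hjS, rfl⟩) h

theorem exists_isPBH_lapMat {N : ℕ} {E : Finset (Fin N × Fin N)} {Iu : Finset (Fin N)}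
    (h : ∀ i, inputReachable E Iu i) :
    ∃ w : Fin N × Fin N → ℝ, IsPBH ((lapMat E w).map Complex.ofRealHom)
      ((deltaMat Iu : Matrix (Fin N) {i // i ∈ Iu} ℝ).map Complex.ofRealHom) := by
  obtain ⟨d, p, hdp⟩ := exists_depth_parent h
  let w : Fin N × Fin N → ℝ := fun e => if e.2 ∉ Iu ∧ p e.2 = e.1 then (e.2 : ℕ) + 1 else 0
  have hpne : ∀ i ∉ Iu, p i ≠ i := by
    intro i hi hpi
    have := (hdp i hi).2
    rw [hpi] at this
    omega
  let ω : Fin N → ℂ := fun i => (i : ℕ) + 1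
  have hlap : ∀ i j, (lapMat E w).map Complex.ofRealHom i j =
      (if i = j ∧ i ∉ Iu then ω j else 0) - if i ∉ Iu ∧ p i = j then ω i else 0 := by
    intro i j
    by_cases hij : i = j
    · subst hij
      by_cases hi : i ∈ Iu
      · simp [lapMat, w, hi]
      · have hpi := hpne i hi
        simp only [lapMat, w, hi, ω, map_apply, of_apply, if_true, not_false_eq_true, true_and,
          and_true, hpi, if_false, sub_zero]
        rw [Finset.sum_eq_single (p i)]
        · simp
        · intro k _ hk
          exact if_neg (Ne.symm hk)
        · intro hk
          exact absurd (Finset.mem_filter.2 ⟨Finset.mem_univ _, hpi, (hdp i hi).1⟩) hk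
    · by_cases hi : i ∈ Iu
      · simp [lapMat, w, hi, hij]
      · by_cases hpj : p i = j
        · have := (hdp i hi).1
          rw [hpj] at this
          simp [lapMat, w, hi, hij, hpj, this, ω]
        · simp [lapMat, w, hi, hij, hpj]
  refine ⟨w, fun μ γ hγ hγD => ?_⟩
  have hroot : ∀ i ∈ Iu, γ i = 0 := by
    intro i hi
    have := congrFun hγD ⟨i, hi⟩
    simpa [vecMul, dotProduct, deltaMat, apply_ite] using this
  have hval : ∀ j, (if j ∉ Iu then ω j else 0) * γ j -
      ∑ k ∈ Finset.univ.filter (fun k => k ∉ Iu ∧ p k = j), ω k * γ k = μ * γ j := by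
    intro j
    have := congrFun hγ j
    rw [Pi.smul_apply, smul_eq_mul] at this
    rw [← this]
    simp only [vecMul, dotProduct, hlap, mul_sub, Finset.sum_sub_distrib, Finset.sum_filter]
    congr 1
    · rw [Finset.sum_eq_single j]
      · simp [mul_comm]
      · intro k _ hk
        simp [hk]
      · simp
    · refine Finset.sum_congr rfl fun k _ => ?_
      split_ifs <;> ring
  refine eq_zero_of_forest Iu d p (fun i hi => (hdp i hi).2) ω ?_ ?_ μ γ hroot ?_ ?_
  · intro i j hij
    exact Fin.ext (by simpa [ω] using hij)
  · intro i
    exact Nat.cast_add_one_ne_zero _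
  · intro j hj
    have := hval j
    rw [if_pos hj] at this
    linear_combination this
  · intro j hj
    have := hval j
    rw [hroot j hj] at this
    linear_combination -this

theorem inputReachable_of_isCtrb {K : Type*} [Field K] {n N : ℕ} (hn : 1 ≤ n)
    {A B : Matrix (Fin n) (Fin n) K} {b : Matrix (Fin n) (Fin 1) K}
    {E : Finset (Fin N × Fin N)} {Iu : Finset (Fin N)} {w : Fin N × Fin N → K}
    (h : IsCtrb ((1 : Matrix (Fin N) (Fin N) K) ⊗ₖ A - lapMat E w ⊗ₖ B)
      ((deltaMat Iu : Matrix (Fin N) {i // i ∈ Iu} K) ⊗ₖ b)) (i : Fin N) :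
    inputReachable E Iu i := by
  by_contra hi
  rw [isCtrb_iff_vecMul] at h
  set M := (1 : Matrix (Fin N) (Fin N) K) ⊗ₖ A - lapMat E w ⊗ₖ B with hM
  have hstep : ∀ y : Fin N × Fin n → K, (∀ j q, inputReachable E Iu j → y (j, q) = 0) →
      ∀ j q, inputReachable E Iu j → (y ᵥ* M) (j, q) = 0 := by
    intro y hy j q hj
    refine Finset.sum_eq_zero fun ⟨k, r⟩ _ => ?_
    by_cases hk : inputReachable E Iu k
    · rw [hy k r hk, zero_mul]
    · have hkj : k ≠ j := by rintro rfl; exact hk hj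
      have hE : (j, k) ∉ E := by
        intro hE
        obtain ⟨s, hs, hsj⟩ := hj
        exact hk ⟨s, hs, hsj.tail hE⟩
      simp [hM, lapMat, hkj, hE]
  have hall : ∀ k : ℕ, ∀ y : Fin N × Fin n → K,
      (∀ j q, inputReachable E Iu j → y (j, q) = 0) →
      y ᵥ* (M ^ k * ((deltaMat Iu : Matrix (Fin N) {i // i ∈ Iu} K) ⊗ₖ b)) = 0 := by
    intro k
    induction k with
    | zero =>
      intro y hy
      ext ⟨⟨s, hs⟩, q⟩
      rw [pow_zero, Matrix.one_mul]
      refine Finset.sum_eq_zero fun ⟨j, r⟩ _ => ?_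
      by_cases hjs : j = s
      · rw [hy j r ⟨s, hs, hjs ▸ .refl⟩, zero_mul]
      · simp [deltaMat, hjs]
    | succ k ih =>
      intro y hy
      rw [pow_succ', Matrix.mul_assoc, ← vecMul_vecMul]
      exact ih _ (hstep y hy)
  have h0 := h (fun jq => if jq.1 = i then 1 else 0) fun k => hall k _ fun j q hj => by
    have : j ≠ i := by rintro rfl; exact hi hj
    simp [this]
  simpa using congrFun h0 (i, ⟨0, hn⟩)

theorem IsPBH.of_kronecker_left {ι ν κ : Type*} [Fintype ι] [Fintype ν] [DecidableEq ι]
    [Nonempty ι] {l : Type*} [Fintype l] {A : Matrix ν ν ℂ} {b : Matrix ν l ℂ} {c : Matrix l ν ℂ}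
    {L : Matrix ι ι ℂ} {D : Matrix ι κ ℂ}
    (h : IsPBH ((1 : Matrix ι ι ℂ) ⊗ₖ A - L ⊗ₖ (b * c)) (D ⊗ₖ b)) : IsPBH A b := by
  rw [isPBH_kronecker_iff] at h
  intro μ y hy hyb
  have hYb : (Matrix.of fun _ : ι => y) * b = 0 := by
    ext i q
    exact congrFun hyb q
  have hY := h μ (Matrix.of fun _ => y) (by
    rw [hYb, Matrix.mul_zero, Matrix.zero_mul, add_zero]
    ext i q
    exact congrFun hy q) (by rw [hYb, Matrix.mul_zero])
  exact congrFun hY (Classical.arbitrary ι)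

theorem IsPBH.rank_le_of_mul_eq_smul {ι κ o : Type*} [Fintype ι] [Fintype κ] [Fintype o]
    [DecidableEq ι] {M : Matrix ι ι ℂ} {Q : Matrix ι κ ℂ} (h : IsPBH M Q) {μ : ℂ}
    {V : Matrix ι o ℂ} (hV : M * V = μ • V) : V.rank ≤ Fintype.card κ := by
  by_contra! hlt
  set T := M - μ • (1 : Matrix ι ι ℂ) with hT
  have hTV : T * V = 0 := by
    rw [hT, Matrix.sub_mul, hV, smul_mul, Matrix.one_mul, sub_self]
  have hrank := rank_add_rank_le_card_of_mul_eq_zero hTV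
  have hker := T.vecMulLinear.finrank_range_add_finrank_ker
  have hrange : Module.finrank ℂ (LinearMap.range T.vecMulLinear) = T.rank := by
    rw [← rank_transpose, Matrix.rank, mulVecLin_transpose]
  rw [hrange, Module.finrank_fintype_fun_eq_card] at hker
  have hne := LinearMap.ker_ne_bot_of_finrank_lt
    (f := Q.vecMulLinear.domRestrict (LinearMap.ker T.vecMulLinear))
    (by rw [Module.finrank_fintype_fun_eq_card]; omega)
  obtain ⟨⟨y, hyT⟩, hyQ, hy0⟩ := (Submodule.ne_bot_iff _).1 hne
  refine hy0 (Subtype.ext (h μ y ?_ hyQ))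
  have : y ᵥ* T = 0 := hyT
  rwa [hT, vecMul_sub, vecMul_smul, vecMul_one, sub_eq_zero] at this

theorem IsPBH.of_kronecker_right {ι ν κ l : Type*} [Fintype ι] [Fintype ν] [Fintype κ]
    [Fintype l] [DecidableEq ι] [DecidableEq ν] {A : Matrix ν ν ℂ} {b : Matrix ν l ℂ}
    {c : Matrix l ν ℂ} {L : Matrix ι ι ℂ} {D : Matrix ι κ ℂ}
    (h : IsPBH ((1 : Matrix ι ι ℂ) ⊗ₖ A - L ⊗ₖ (b * c)) (D ⊗ₖ b))
    (hcard : Fintype.card κ * Fintype.card l < Fintype.card ι) : IsPBH Aᵀ cᵀ := by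
  intro μ v hv hcv
  rw [vecMul_transpose] at hv hcv
  by_contra hv0
  obtain ⟨q, hq⟩ := Function.ne_iff.1 hv0
  set C : Matrix ν (Fin 1) ℂ := Matrix.of fun r _ => v r with hC
  have hAC : A * C = μ • C := by
    ext r s
    exact congrFun hv r
  have hcC : c * C = 0 := by
    ext r s
    exact congrFun hcv r
  have hle := h.rank_le_of_mul_eq_smul (μ := μ) (V := (1 : Matrix ι ι ℂ) ⊗ₖ C) (by
    rw [Matrix.sub_mul, ← mul_kronecker_mul, ← mul_kronecker_mul, Matrix.mul_assoc, hcC, hAC,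
      Matrix.mul_zero, kronecker_zero, sub_zero, Matrix.one_mul, kronecker_smul])
  have hrank : Fintype.card ι ≤ ((1 : Matrix ι ι ℂ) ⊗ₖ C).rank := by
    have hsub : ((1 : Matrix ι ι ℂ) ⊗ₖ C).submatrix (fun i => (i, q)) (fun i => (i, 0)) =
        v q • (1 : Matrix ι ι ℂ) := by
      ext i j
      simp [hC, mul_comm]
    have h1 := ((1 : Matrix ι ι ℂ) ⊗ₖ C).rank_submatrix_le (fun i => (i, q)) (fun i => (i, 0))
    rw [hsub, rank_of_isUnit] at h1
    · exact h1
    · exact isUnit_one.smul (Units.mk0 (v q) hq)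
  rw [Fintype.card_prod] at hle
  omega

theorem map_kronecker_sub {ι ν l : Type*} [Fintype l] [DecidableEq ι] (A : Matrix ν ν ℝ)
    (b : Matrix ν l ℝ) (c : Matrix l ν ℝ) (L : Matrix ι ι ℝ) :
    ((1 : Matrix ι ι ℝ) ⊗ₖ A - L ⊗ₖ (b * c)).map Complex.ofRealHom =
      (1 : Matrix ι ι ℂ) ⊗ₖ A.map Complex.ofRealHom - L.map Complex.ofRealHom ⊗ₖ
        (b.map Complex.ofRealHom * c.map Complex.ofRealHom) := by
  ext ⟨i, r⟩ ⟨j, s⟩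
  by_cases hij : i = j <;> simp [Matrix.mul_apply, hij]

theorem map_kronecker {ι ν κ l : Type*} (D : Matrix ι κ ℝ) (b : Matrix ν l ℝ) :
    (D ⊗ₖ b).map Complex.ofRealHom = D.map Complex.ofRealHom ⊗ₖ b.map Complex.ofRealHom := by
  ext
  simp

/-- Theorem 1 of the paper. For a SISO networked relative coupling system
with subsystem `(A, b, c)`, digraph `G_sys = ({1,…,N}, E)` without self-loops, and driving set
`I_u` with `|I_u| < N`: the system is structurally controllable (some weight vector makes
`(I_N ⊗ A - L(w) ⊗ (b c), Δ ⊗ b)` controllable) iff `(A, b)` is controllable, `(A, c)` is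
observable, and the network is globally input-reachable. -/
theorem stmt0 {n N : ℕ} (hn : 1 ≤ n)
    (A : Matrix (Fin n) (Fin n) ℝ) (b : Matrix (Fin n) (Fin 1) ℝ) (c : Matrix (Fin 1) (Fin n) ℝ)
    (E : Finset (Fin N × Fin N)) (hE : ∀ e ∈ E, e.1 ≠ e.2)
    (Iu : Finset (Fin N)) (hIu : Iu.card < N) :
    (∃ w : Fin N × Fin N → ℝ,
        IsCtrb ((1 : Matrix (Fin N) (Fin N) ℝ) ⊗ₖ A - lapMat E w ⊗ₖ (b * c))
          ((deltaMat Iu : Matrix (Fin N) {i // i ∈ Iu} ℝ) ⊗ₖ b)) ↔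
      ((IsCtrb A b ∧ IsObsv A c) ∧ ∀ i : Fin N, inputReachable E Iu i) := by
  constructor
  · rintro ⟨w, hw⟩
    have : Nonempty (Fin N) := ⟨⟨0, by omega⟩⟩
    refine ⟨?_, inputReachable_of_isCtrb hn hw⟩
    rw [isCtrb_iff_isPBH, map_kronecker_sub, map_kronecker] at hw
    refine ⟨(isCtrb_iff_isPBH A b).2 hw.of_kronecker_left, (isCtrb_iff_isPBH Aᵀ cᵀ).2 ?_⟩
    exact hw.of_kronecker_right (by simpa using hIu)
  · rintro ⟨⟨hAb, hAc⟩, hreach⟩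
    obtain ⟨w, hw⟩ := exists_isPBH_lapMat hreach
    refine ⟨w, ?_⟩
    rw [isCtrb_iff_isPBH, map_kronecker_sub, map_kronecker]
    exact ((isCtrb_iff_isPBH A b).1 hAb).kronecker ((isCtrb_iff_isPBH Aᵀ cᵀ).1 hAc) hw
end
end

section
/- Let A ∈ ℝ^{n×n} and B ∈ ℝ^{n×r} with (A, B) controllable, and let c₀ ∈ ℝ^{1×n} with c₀ ≠ 0. Then the rational matrix function λ ↦ c₀ (λI − A)^{−1} B is not identically zero: there exists λ ∈ ℂ such that det(λI − A) ≠ 0 and c₀ (λI − A)^{−1} B ≠ 0 (where the real matrices A, B, c₀ are viewed as complex matrices). -/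
open Matrix
open scoped Kronecker

noncomputable section

section Resolvent

attribute [local instance] Matrix.linftyOpNormedRing Matrix.linftyOpNormedAlgebra

/-- The resolvent `(z I - A)⁻¹` of a complex matrix tends to zero at infinity. -/
theorem tendsto_smul_one_sub_inv_cobounded {ι : Type*} [Fintype ι] [DecidableEq ι]
    (A : Matrix ι ι ℂ) :
    Filter.Tendsto (fun z : ℂ => (z • (1 : Matrix ι ι ℂ) - A)⁻¹) (Bornology.cobounded ℂ)
      (nhds 0) := by
  have : CompleteSpace (Matrix ι ι ℂ) := FiniteDimensional.complete ℂ _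
  refine (spectrum.resolvent_tendsto_cobounded (𝕜 := ℂ) A).congr fun z => ?_
  rw [resolvent, Algebra.algebraMap_eq_smul_one, Matrix.nonsing_inv_eq_ringInverse]

end Resolvent

theorem eventually_det_smul_one_sub_ne_zero {ι : Type*} [Fintype ι] [DecidableEq ι]
    (A : Matrix ι ι ℂ) :
    ∀ᶠ z : ℂ in Bornology.cobounded ℂ, (z • (1 : Matrix ι ι ℂ) - A).det ≠ 0 := by
  have hfin : {z : ℂ | A.charpoly.IsRoot z}.Finite :=
    Polynomial.finite_setOfPred_isRoot A.charpoly_monic.ne_zero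
  filter_upwards [Bornology.isBounded_def.mp hfin.isBounded] with z hz hdet
  apply hz
  rw [Set.mem_ofPred_eq, Polynomial.IsRoot, Matrix.eval_charpoly, ← hdet,
    Matrix.smul_one_eq_diagonal, Matrix.scalar_apply]

/-- If `C (z I - A)⁻¹ B` vanishes identically, then so does `C A (z I - A)⁻¹ B`, and `C B = 0`. -/
theorem mul_eq_zero_of_transfer_eq_zero {ι κ m : Type*} [Fintype ι] [DecidableEq ι]
    (A : Matrix ι ι ℂ) (B : Matrix ι κ ℂ) (C : Matrix m ι ℂ)
    (h : ∀ z : ℂ, (z • (1 : Matrix ι ι ℂ) - A).det ≠ 0 →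
      C * (z • (1 : Matrix ι ι ℂ) - A)⁻¹ * B = 0) :
    C * B = 0 ∧ ∀ z : ℂ, (z • (1 : Matrix ι ι ℂ) - A).det ≠ 0 →
      C * A * (z • (1 : Matrix ι ι ℂ) - A)⁻¹ * B = 0 := by
  have key : ∀ z : ℂ, (z • (1 : Matrix ι ι ℂ) - A).det ≠ 0 →
      C * A * (z • (1 : Matrix ι ι ℂ) - A)⁻¹ * B = -(C * B) := by
    intro z hz
    have hinv := Matrix.mul_nonsing_inv _ (isUnit_iff_ne_zero.mpr hz)
    have hA : A * (z • (1 : Matrix ι ι ℂ) - A)⁻¹ = z • (z • (1 : Matrix ι ι ℂ) - A)⁻¹ - 1 := by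
      rw [Matrix.sub_mul, Matrix.smul_mul, Matrix.one_mul] at hinv
      rw [sub_eq_iff_eq_add'] at hinv
      rw [hinv, add_sub_cancel_right]
    rw [Matrix.mul_assoc C A, hA, Matrix.mul_sub, Matrix.sub_mul, Matrix.mul_smul,
      Matrix.smul_mul, h z hz, smul_zero, Matrix.mul_one, zero_sub]
  have hlim : Filter.Tendsto (fun z : ℂ => C * A * (z • (1 : Matrix ι ι ℂ) - A)⁻¹ * B)
      (Bornology.cobounded ℂ) (nhds 0) := by
    have hcont : Continuous fun X : Matrix ι ι ℂ => C * A * X * B := by fun_prop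
    have hzero := (hcont.tendsto 0).comp (tendsto_smul_one_sub_inv_cobounded A)
    rwa [Matrix.mul_zero, Matrix.zero_mul] at hzero
  have hconst : Filter.Tendsto (fun z : ℂ => C * A * (z • (1 : Matrix ι ι ℂ) - A)⁻¹ * B)
      (Bornology.cobounded ℂ) (nhds (-(C * B))) :=
    tendsto_const_nhds.congr' <| (eventually_det_smul_one_sub_ne_zero A).mono
      fun z hz => (key z hz).symm
  have hCB : C * B = 0 := neg_eq_zero.mp (tendsto_nhds_unique hconst hlim)
  exact ⟨hCB, fun z hz => by rw [key z hz, hCB, neg_zero]⟩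

/-- If `C (z I - A)⁻¹ B` vanishes identically, then all Markov parameters `C Aᵏ B` vanish. -/
theorem mul_pow_mul_eq_zero_of_transfer_eq_zero {ι κ m : Type*} [Fintype ι] [DecidableEq ι]
    (A : Matrix ι ι ℂ) (B : Matrix ι κ ℂ) (k : ℕ) (C : Matrix m ι ℂ)
    (h : ∀ z : ℂ, (z • (1 : Matrix ι ι ℂ) - A).det ≠ 0 →
      C * (z • (1 : Matrix ι ι ℂ) - A)⁻¹ * B = 0) :
    C * (A ^ k * B) = 0 := by
  induction k generalizing C with
  | zero => simpa using (mul_eq_zero_of_transfer_eq_zero A B C h).1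
  | succ k ih =>
    rw [pow_succ', Matrix.mul_assoc A, ← Matrix.mul_assoc C]
    exact ih _ (mul_eq_zero_of_transfer_eq_zero A B C h).2

/-- For a controllable pair `(M, Q)` over a field, a matrix `C` with `C Mᵏ Q = 0` for all `k`
is zero. -/
theorem IsCtrb.eq_zero_of_mul_pow_mul_eq_zero {K ι κ m : Type*} [Field K] [Fintype ι] [Fintype κ]
    [DecidableEq ι] {M : Matrix ι ι K} {Q : Matrix ι κ K} (hMQ : IsCtrb M Q) {C : Matrix m ι K}
    (hC : ∀ k : ℕ, C * (M ^ k * Q) = 0) : C = 0 := by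
  rw [IsCtrb, Matrix.rank_eq_finrank_span_row] at hMQ
  have hinj := Matrix.vecMul_injective_iff.mpr
    (linearIndependent_iff_card_eq_finrank_span.mpr hMQ.symm)
  funext i
  apply hinj
  refine Eq.trans ?_ (Matrix.zero_vecMul _).symm
  funext jk
  exact congrFun (congrFun (hC jk.1) i) jk.2

/-- Lemma 2 of the paper. If `(A, B)` is controllable and `c₀ ≠ 0`, then the
rational matrix function `λ ↦ c₀ (λI - A)⁻¹ B` is not identically zero. -/
theorem stmt1 {n r : ℕ} (A : Matrix (Fin n) (Fin n) ℝ) (B : Matrix (Fin n) (Fin r) ℝ)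
    (c0 : Matrix (Fin 1) (Fin n) ℝ) (hAB : IsCtrb A B) (hc0 : c0 ≠ 0) :
    ∃ z : ℂ,
      (z • (1 : Matrix (Fin n) (Fin n) ℂ) - A.map (fun a => (a : ℂ))).det ≠ 0 ∧
      c0.map (fun a => (a : ℂ)) * (z • (1 : Matrix (Fin n) (Fin n) ℂ) - A.map (fun a => (a : ℂ)))⁻¹
          * B.map (fun a => (a : ℂ)) ≠ 0 := by
  by_contra! hzero
  refine hc0 (hAB.eq_zero_of_mul_pow_mul_eq_zero fun k => ?_)
  have hk := mul_pow_mul_eq_zero_of_transfer_eq_zero _ _ k _ hzero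
  apply Matrix.map_injective Complex.ofReal_injective
  have hmap : ∀ {p q : ℕ} (M : Matrix (Fin p) (Fin q) ℝ),
      M.map (fun a => (a : ℂ)) = M.map Complex.ofRealHom := fun _ => rfl
  rw [hmap, hmap, hmap, ← Matrix.map_pow, ← Matrix.map_mul, ← Matrix.map_mul] at hk
  exact hk.trans (Matrix.map_zero _ Complex.ofReal_zero).symm
end
end

section
/- Let G = ({1,…,N}, E) be a digraph without self-loops such that every vertex of {1,…,N} is reachable from vertex 1 by a directed path. Then there exists a weight vector w ∈ ℝ^{|E|} such that the associated Laplacian L(w) ∈ ℝ^{N×N} satisfies: (i) the pair (L(w), e₁) is controllable, where e₁ ∈ ℝ^N is the first standard basis vector, and (ii) L(w) has no repeated eigenvalues, i.e., its characteristic polynomial has N distinct complex roots. -/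
open Matrix
open scoped Kronecker

noncomputable section

/-- In a digraph where every vertex is reachable from `r`, each vertex other than `r` has a
predecessor of strictly smaller depth. -/
theorem exists_parent_depth {V : Type*} (S : V → V → Prop) (r : V)
    (h : ∀ j, Relation.ReflTransGen S r j) :
    ∃ (p : V → V) (depth : V → ℕ), ∀ j, j ≠ r → S (p j) j ∧ depth (p j) < depth j := by
  classical
  obtain ⟨reach, hzero, hsucc⟩ : ∃ reach : ℕ → V → Prop, (∀ j, reach 0 j ↔ j = r) ∧
      ∀ n j, reach (n + 1) j ↔ ∃ i, reach n i ∧ S i j :=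
    ⟨fun n => Nat.rec (fun j => j = r) (fun _ P j => ∃ i, P i ∧ S i j) n,
      fun _ => Iff.rfl, fun _ _ => Iff.rfl⟩
  have hreach : ∀ j, ∃ n, reach n j := fun j => by
    induction h j with
    | refl => exact ⟨0, (hzero r).mpr rfl⟩
    | tail _ hbc ih => obtain ⟨n, hn⟩ := ih; exact ⟨n + 1, (hsucc _ _).mpr ⟨_, hn, hbc⟩⟩
  have hleast : ∀ j, ∃ n, reach n j ∧ ∀ m, reach m j → n ≤ m := fun j =>
    ⟨Nat.find (hreach j), Nat.find_spec (hreach j), fun _ => Nat.find_min' (hreach j)⟩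
  choose depth hdepth hmin using hleast
  have hpred : ∀ j, ∃ i, j ≠ r → S i j ∧ depth i < depth j := fun j => by
    have hj := hdepth j
    cases hn : depth j with
    | zero => rw [hn, hzero] at hj; exact ⟨r, fun hne => absurd hj hne⟩
    | succ n =>
      rw [hn, hsucc] at hj
      obtain ⟨i, hi, hS⟩ := hj
      exact ⟨i, fun _ => ⟨hS, Nat.lt_succ_of_le (hmin i n hi)⟩⟩
  choose p hp using hpred
  exact ⟨p, depth, hp⟩

/-- The Laplacian of a weighted spanning arborescence: the edge into `i` from its parent `p i` has
weight `d i`, all other weights vanish. -/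
theorem lapMat_arborescence_row {R : Type*} [CommRing R] {N : ℕ} (E : Finset (Fin N × Fin N))
    (r : Fin N) (p : Fin N → Fin N) (d : Fin N → R) (hr : d r = 0)
    (hp : ∀ j, j ≠ r → (p j, j) ∈ E ∧ p j ≠ j) (i : Fin N) :
    lapMat E (fun e => if e.1 = p e.2 then d e.2 else 0) i =
      d i • (Pi.single i 1 - Pi.single (p i) 1) := by
  by_cases hi : i = r
  · subst hi
    ext j
    simp [lapMat, hr]
  · obtain ⟨hE, hne⟩ := hp i hi
    ext j
    by_cases hij : i = j
    · subst hij
      simp [lapMat, Finset.sum_ite_eq', hne, hE, hne.symm]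
    · by_cases hj : j = p i
      · subst hj
        simp [lapMat, hij, hE, hne]
      · simp [lapMat, hij, hj, Ne.symm hij]

/-- Rows of arborescence type admit, for each vertex `m` and each scalar `μ` avoiding the weights
of the vertices of smaller depth, a left eigenvector modulo `Pi.single m` not vanishing at `r`. -/
theorem exists_vecMul_eq_of_arborescence {K ι : Type*} [Field K] [Fintype ι] [DecidableEq ι]
    (L : Matrix ι ι K) (r : ι) (p : ι → ι) (depth : ι → ℕ) (d : ι → K)
    (hr : d r = 0) (hd : ∀ j, j ≠ r → d j ≠ 0) (hp : ∀ j, j ≠ r → depth (p j) < depth j)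
    (hL : ∀ i, L i = d i • (Pi.single i 1 - Pi.single (p i) 1)) (μ : K) (m : ι)
    (hμ : ∀ j, depth j < depth m → d j ≠ μ) :
    ∃ v : ι → K, v r ≠ 0 ∧ v ᵥ* L = μ • v + (d m - μ) • Pi.single m 1 := by
  induction hn : depth m using Nat.strong_induction_on generalizing m with
  | _ n ih =>
    subst hn
    by_cases hm : m = r
    · subst hm
      refine ⟨Pi.single m 1, by simp, ?_⟩
      rw [Matrix.single_one_vecMul, Matrix.row, hL, hr]
      module
    · have hlt := hp m hm
      obtain ⟨v, hv, hvL⟩ := ih _ hlt (p m) (fun j hj => hμ j (hj.trans hlt)) rfl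
      have hne : d (p m) - μ ≠ 0 := sub_ne_zero.mpr (hμ _ hlt)
      refine ⟨Pi.single m 1 + (d m / (d (p m) - μ)) • v, ?_, ?_⟩
      · simp [Ne.symm hm, hv, hne, hd m hm]
      · rw [Matrix.add_vecMul, Matrix.smul_vecMul, hvL, Matrix.single_one_vecMul, Matrix.row, hL]
        have hc : d m = d m / (d (p m) - μ) * (d (p m) - μ) := by field_simp
        generalize d m / (d (p m) - μ) = c at hc
        ext j
        simp only [Pi.add_apply, Pi.smul_apply, Pi.sub_apply, smul_eq_mul]
        linear_combination -(Pi.single (p m) (1 : K) : ι → K) j * hc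

/-- A left eigenvector of `M` is a left eigenvector of every power of `M`. -/
theorem vecMul_pow_of_vecMul_eq_smul {R ι : Type*} [CommRing R] [Fintype ι] [DecidableEq ι]
    {M : Matrix ι ι R} {v : ι → R} {μ : R} (h : v ᵥ* M = μ • v) (k : ℕ) :
    v ᵥ* M ^ k = μ ^ k • v := by
  induction k with
  | zero => simp
  | succ k ih => rw [pow_succ, ← Matrix.vecMul_vecMul, ih, Matrix.smul_vecMul, h, smul_smul, pow_succ]

/-- A matrix with distinct eigenvalues whose left eigenvectors are not orthogonal to the input
vector `e_r` is controllable from `r`. -/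
theorem isCtrb_of_left_eigenvectors {K : Type*} [Field K] {N : ℕ} (L : Matrix (Fin N) (Fin N) K)
    (r : Fin N) (d : Fin N → K) (hd : Function.Injective d) (v : Fin N → Fin N → K)
    (hv : ∀ k, v k r ≠ 0) (hvL : ∀ k, v k ᵥ* L = d k • v k) :
    IsCtrb L (Matrix.of fun i (_ : Fin 1) => if i = r then (1 : K) else 0) := by
  unfold IsCtrb
  set A := Matrix.of fun (i : Fin N) (jk : Fin (Fintype.card (Fin N)) × Fin 1) =>
      (L ^ (jk.1 : ℕ) * Matrix.of fun i (_ : Fin 1) => if i = r then (1 : K) else 0) i jk.2 with hA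
  let e : Fin N → Fin (Fintype.card (Fin N)) × Fin 1 := fun i => (Fin.cast (by simp) i, 0)
  have hprod : Matrix.of v * A.submatrix id e =
      Matrix.diagonal (fun k => v k r) * Matrix.vandermonde d := by
    ext k j
    have hpow := congrFun (vecMul_pow_of_vecMul_eq_smul (hvL k) (j : ℕ)) r
    simp only [Matrix.vecMul, dotProduct, Pi.smul_apply, smul_eq_mul] at hpow
    simp [Matrix.mul_apply, hA, e, Matrix.diagonal_apply, Matrix.vandermonde_apply, hpow, mul_comm]
  have hdet : (A.submatrix id e).det ≠ 0 := by
    intro h0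
    have hdet := congrArg Matrix.det hprod
    rw [Matrix.det_mul, Matrix.det_mul, h0, mul_zero, Matrix.det_diagonal] at hdet
    exact mul_ne_zero (Finset.prod_ne_zero_iff.mpr fun k _ => hv k)
      (Matrix.det_vandermonde_ne_zero_iff.mpr hd) hdet.symm
  refine le_antisymm (Matrix.rank_le_card_height A) ?_
  exact (Matrix.rank_of_isUnit _ ((Matrix.isUnit_iff_isUnit_det _).mpr hdet.isUnit)).symm.trans_le
    (Matrix.rank_submatrix_le A id e)

/-- A matrix with a left eigenvector for each of `N` distinct scalars has `N` distinct
eigenvalues. -/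
theorem card_roots_charpoly_of_left_eigenvectors {K ι : Type*} [Field K] [DecidableEq K]
    [Fintype ι] [DecidableEq ι] (L : Matrix ι ι K)
    (d : ι → K) (hd : Function.Injective d) (v : ι → ι → K)
    (hv : ∀ k, v k ≠ 0) (hvL : ∀ k, v k ᵥ* L = d k • v k) :
    L.charpoly.roots.toFinset.card = Fintype.card ι := by
  refine le_antisymm ?_ ?_
  · calc _ ≤ _ := Multiset.toFinset_card_le _
      _ ≤ _ := Polynomial.card_roots' _
      _ = _ := L.charpoly_natDegree_eq_dim
  · rw [← Finset.card_univ, ← Finset.card_image_of_injective _ hd]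
    refine Finset.card_le_card fun x hx => ?_
    obtain ⟨k, -, rfl⟩ := Finset.mem_image.mp hx
    rw [Multiset.mem_toFinset, Polynomial.mem_roots L.charpoly_monic.ne_zero,
      Polynomial.IsRoot.def, Matrix.eval_charpoly]
    refine Matrix.exists_vecMul_eq_zero_iff.mp ⟨v k, hv k, ?_⟩
    rw [Matrix.vecMul_sub, hvL]
    ext i
    simp [Matrix.scalar_apply]

/-- Corollary 1 of the paper. If every vertex of a digraph without self-loops
is reachable from vertex `1`, then there is a weight vector `w` such that `(L(w), e₁)` is
controllable while `L(w)` has `N` distinct complex eigenvalues. -/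
theorem stmt2 {N : ℕ} (hN : 0 < N) (E : Finset (Fin N × Fin N)) (hE : ∀ e ∈ E, e.1 ≠ e.2)
    (hspan : ∀ j : Fin N, Relation.ReflTransGen (fun a b => (a, b) ∈ E) (⟨0, hN⟩ : Fin N) j) :
    ∃ w : Fin N × Fin N → ℝ,
      IsCtrb (lapMat E w)
        (Matrix.of fun i (_ : Fin 1) => if i = (⟨0, hN⟩ : Fin N) then (1 : ℝ) else 0) ∧
      (((lapMat E w).map (fun a => (a : ℂ))).charpoly.roots.toFinset.card = N) := by
  classical
  obtain ⟨p, depth, hp⟩ := exists_parent_depth (fun a b => (a, b) ∈ E) _ hspan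
  let d : Fin N → ℝ := fun i => ((i : ℕ) : ℝ)
  have hd : Function.Injective d := fun a b hab => Fin.ext (Nat.cast_injective hab)
  have hr : d ⟨0, hN⟩ = 0 := by simp [d]
  have hd0 : ∀ j, j ≠ ⟨0, hN⟩ → d j ≠ 0 := fun j hj h0 => hj (hd (h0.trans hr.symm))
  let w : Fin N × Fin N → ℝ := fun e => if e.1 = p e.2 then d e.2 else 0
  have hL := lapMat_arborescence_row E ⟨0, hN⟩ p d hr
    fun j hj => ⟨(hp j hj).1, fun h => (hp j hj).2.ne (congrArg depth h)⟩
  have hex : ∀ k, ∃ v : Fin N → ℝ, v ⟨0, hN⟩ ≠ 0 ∧ v ᵥ* lapMat E w = d k • v := fun k => by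
    simpa using exists_vecMul_eq_of_arborescence (lapMat E w) ⟨0, hN⟩ p depth d hr hd0
      (fun j hj => (hp j hj).2) hL (d k) k fun j hj h => hj.ne (congrArg depth (hd h))
  choose v hv hvL using hex
  refine ⟨w, isCtrb_of_left_eigenvectors _ _ d hd v hv hvL, ?_⟩
  have hcard := card_roots_charpoly_of_left_eigenvectors
    ((lapMat E w).map (fun a => (a : ℂ))) (fun k => (d k : ℂ))
    (Complex.ofReal_injective.comp hd) (fun k i => (v k i : ℂ))
    (fun k h => hv k (Complex.ofReal_eq_zero.mp (congrFun h _)))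
    (fun k => by
      ext i
      have h := congrArg (fun x : ℝ => (x : ℂ)) (congrFun (hvL k) i)
      simpa [Matrix.vecMul, dotProduct] using h)
  rw [Fintype.card_fin] at hcard
  convert hcard
end
end

section
/- Let A ∈ ℝ^{n×n}, B ∈ ℝ^{n×r}, C ∈ ℝ^{r×n}, and let G_sys = ({1,…,N}, E) be a digraph without self-loops that has a spanning tree, i.e., there is a vertex from which every vertex of {1,…,N} is reachable by a directed path. Let d₀ be the maximal degree of a polynomial α₀ ∈ ℝ[s] that divides det(sI_n − A + t·BC) in the polynomial ring ℝ[t][s] (t a single indeterminate). Let p = (p_e)_{e∈E} be algebraically independent indeterminates, let L(p) be the generic Laplacian with entries in ℝ[p], and let A_sys(p) = I_N ⊗ A − L(p) ⊗ (BC). Then the maximal degree of a polynomial α ∈ ℝ[s] that divides det(sI_{nN} − A_sys(p)) in ℝ[p][s] equals n + (N−1)·d₀. Equivalently, exactly (N−1)·(n − d₀) of the modes of A_sys(p) are parameter-dependent (counting multiplicities). -/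
open Matrix
open scoped Kronecker

noncomputable section

section Transfer
open Polynomial
variable {K R ι κ : Type*} [CommRing K] [CommRing R] [Fintype ι] [DecidableEq ι]
  [Fintype κ] [DecidableEq κ]

/-- The ring homomorphism `K[t][s] → Mat_ι(R[s])` that sends `s` to the scalar matrix `s` and
`t` to `L`. -/
def substMatrix (φ : K →+* R) (L : Matrix ι ι R) : K[X][X] →+* Matrix ι ι R[X] :=
  (aeval (R := R[X]) (L.map (C : R →+* R[X]))).toRingHom.comp
    (eval₂RingHom (mapRingHom ((C : R →+* R[X]).comp φ)) (C X))

theorem substMatrix_map_C (φ : K →+* R) (L : Matrix ι ι R) (α : K[X]) :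
    substMatrix φ L (α.map C) = algebraMap R[X] _ (α.map φ) := by
  have h : (substMatrix φ L).comp (mapRingHom C) =
      (algebraMap R[X] (Matrix ι ι R[X])).comp (mapRingHom φ) := by
    ext <;> simp [substMatrix]
  exact congrArg (fun f => f α) h

/-- The characteristic polynomial of `I ⊗ A - L ⊗ Q` is the determinant of `det(sI - A + tQ)`
evaluated at `t = L`. -/
theorem charpoly_one_kronecker_sub_kronecker (φ : K →+* R) (A Q : Matrix κ κ K)
    (L : Matrix ι ι R) :
    ((1 : Matrix ι ι R) ⊗ₖ A.map φ - L ⊗ₖ Q.map φ).charpoly =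
      (substMatrix φ L (A.map C - (X : K[X]) • Q.map C).charpoly).det := by
  rw [Matrix.charpoly, Matrix.charpoly, Matrix.det_det,
    ← Matrix.det_reindex_self (Equiv.prodComm ι κ)]
  congr 1
  ext1 ⟨k, i⟩ ⟨l, j⟩
  by_cases hk : k = l <;> by_cases hi : i = j <;>
    simp [substMatrix, hk, hi, Matrix.algebraMap_matrix_apply, Matrix.mul_apply, sub_eq_add_neg,
      mul_comm (C (φ (Q _ _)))]

theorem aeval_mulVec_of_mulVec_eq_zero {M : Matrix ι ι R} {v : ι → R} (h : M *ᵥ v = 0) (p : R[X]) :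
    aeval M p *ᵥ v = p.eval 0 • v := by
  induction p using Polynomial.induction_on' with
  | add p q hp hq => simp [Matrix.add_mulVec, hp, hq, add_smul]
  | monomial n a =>
    rcases n with _ | n
    · simp [Algebra.algebraMap_eq_smul_one, Matrix.smul_mulVec]
    · simp [aeval_monomial, pow_succ, ← Matrix.mulVec_mulVec, h]

theorem dvd_det_of_mulVec_eq_smul {M : Matrix ι ι R} {v : ι → R} {μ : R} (h : M *ᵥ v = μ • v)
    {i : ι} (hi : v i = 1) : μ ∣ M.det := by
  refine ⟨(M.adjugate *ᵥ v) i, ?_⟩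
  have := congrArg (fun w => (M.adjugate *ᵥ w) i) h
  simpa [Matrix.mulVec_mulVec, Matrix.adjugate_mul, Matrix.smul_mulVec, Matrix.mulVec_smul, hi]
    using this

/-- If `L` has zero row sums, then `g(s, 0)` divides `det g(s, L)`. -/
theorem map_eval_zero_dvd_det_substMatrix [Nonempty ι] (φ : K →+* R) {L : Matrix ι ι R}
    (hL : L *ᵥ 1 = 0) (g : K[X][X]) :
    (g.map (evalRingHom 0)).map φ ∣ (substMatrix φ L g).det := by
  have hL' : L.map (C : R →+* R[X]) *ᵥ 1 = 0 := by
    ext1 i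
    have := congrArg C (congrFun hL i)
    simpa [Matrix.mulVec, dotProduct] using this
  refine dvd_det_of_mulVec_eq_smul (v := 1) (i := Classical.arbitrary ι) ?_ rfl
  have h : (evalRingHom 0).comp (eval₂RingHom (mapRingHom ((C : R →+* R[X]).comp φ)) (C X)) =
      (mapRingHom φ).comp (mapRingHom (evalRingHom (0 : K))) := by
    ext <;> simp
  have hg := congrArg (fun f => f g) h
  simp only [RingHom.comp_apply, coe_evalRingHom, coe_mapRingHom] at hg
  rw [← hg]
  exact aeval_mulVec_of_mulVec_eq_zero hL' _

theorem charpoly_mul_pow_dvd [Nonempty ι] (φ : K →+* R) (A Q : Matrix κ κ K) {L : Matrix ι ι R}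
    (hL : L *ᵥ 1 = 0) {α : K[X]}
    (hα : α.map C ∣ (A.map C - (X : K[X]) • Q.map C).charpoly) :
    (A.charpoly * α ^ (Fintype.card ι - 1)).map φ ∣
      ((1 : Matrix ι ι R) ⊗ₖ A.map φ - L ⊗ₖ Q.map φ).charpoly := by
  obtain ⟨g, hg⟩ := hα
  have h0 : A.charpoly = α * g.map (evalRingHom 0) := by
    have := congrArg (Polynomial.map (evalRingHom (0 : K))) hg
    rw [← Matrix.charpoly_map] at this
    convert this using 2
    · ext; simp
    · rw [Polynomial.map_mul, Polynomial.map_map,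
        show (evalRingHom (0 : K)).comp C = RingHom.id K by ext; simp, Polynomial.map_id]
  rw [charpoly_one_kronecker_sub_kronecker, hg, map_mul, Matrix.det_mul, substMatrix_map_C,
    Matrix.algebraMap_eq_diagonal, h0]
  have hc : Fintype.card ι = Fintype.card ι - 1 + 1 := by
    have := Fintype.card_pos (α := ι); omega
  have : (Matrix.diagonal (algebraMap R[X] (ι → R[X]) (α.map φ))).det =
      (α.map φ) ^ (Fintype.card ι - 1) * α.map φ := by
    rw [← pow_succ, ← hc]; simp [Matrix.det_diagonal]
  rw [this]
  obtain ⟨q, hq⟩ := map_eval_zero_dvd_det_substMatrix φ hL g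
  exact ⟨q, by rw [hq]; simp only [Polynomial.map_mul, Polynomial.map_pow]; ring⟩

/-- The characteristic polynomial of `I ⊗ A - L ⊗ Q` for triangular `L`. -/
theorem charpoly_one_kronecker_sub_kronecker_of_blockTriangular {β : Type*} [LinearOrder β]
    [Fintype β] (e : ι ≃ β) {L : Matrix ι ι R} (hL : L.BlockTriangular e) (A Q : Matrix κ κ R) :
    ((1 : Matrix ι ι R) ⊗ₖ A - L ⊗ₖ Q).charpoly = ∏ i, (A - L i i • Q).charpoly := by
  have h : (charmatrix ((1 : Matrix ι ι R) ⊗ₖ A - L ⊗ₖ Q)).BlockTriangular (e ∘ Prod.fst) := by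
    rintro ⟨i, k⟩ ⟨j, l⟩ hij
    have hne : i ≠ j := by rintro rfl; exact lt_irrefl _ hij
    have : L i j = 0 := hL hij
    simp [hne, this]
  rw [Matrix.charpoly, h.det_fintype, ← Equiv.prod_comp e]
  refine Finset.prod_congr rfl fun i _ => ?_
  let f : κ ≃ {a : ι × κ // (e ∘ Prod.fst) a = e i} :=
    { toFun := fun k => ⟨(i, k), rfl⟩
      invFun := fun a => a.1.2
      left_inv := fun _ => rfl
      right_inv := fun ⟨⟨j, k⟩, hj⟩ => by
        obtain rfl : j = i := e.injective hj
        rfl }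
  rw [Matrix.charpoly, ← Matrix.det_submatrix_equiv_self f]
  congr 1
  ext1 k l
  by_cases hk : k = l <;>
    simp [f, Matrix.toSquareBlock_def, charmatrix_apply, Matrix.diagonal_apply, hk]

end Transfer

section Coprime
open Polynomial
variable {K : Type*} [Field K]

theorem finite_setOf_dvd_map_eval {m : K[X]} (hm : m.Monic) {g : K[X][X]} (hg : ¬ m.map C ∣ g) :
    {c : K | m ∣ g.map (evalRingHom c)}.Finite := by
  have hmC : (m.map (C : K →+* K[X])).Monic := hm.map C
  rw [← modByMonic_eq_zero_iff_dvd hmC] at hg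
  obtain ⟨k, hk⟩ : ∃ k, (g %ₘ m.map C).coeff k ≠ 0 := by
    by_contra! h
    exact hg (Polynomial.ext (by simpa using h))
  refine ((g %ₘ m.map C).coeff k).rootSet_finite K |>.subset fun c hc => ?_
  rw [Set.mem_ofPred_eq, ← modByMonic_eq_zero_iff_dvd hm] at hc
  have h := map_modByMonic (p := g) (evalRingHom c) hmC
  rw [Polynomial.map_map, show (evalRingHom c).comp C = RingHom.id K by ext; simp,
    Polynomial.map_id, hc] at h
  rw [mem_rootSet]
  exact ⟨hk, by simpa [coe_aeval_eq_eval] using congrArg (fun q => q.coeff k) h⟩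

theorem exists_isCoprime_map_eval [Infinite K] {α : K[X]} (hα : α ≠ 0) {g : K[X][X]}
    (hg : ∀ m : K[X], Irreducible m → ¬ m.map C ∣ g) :
    ∃ c : K, IsCoprime α (g.map (evalRingHom c)) := by
  classical
  have hfin : (⋃ m ∈ (UniqueFactorizationMonoid.normalizedFactors α).toFinset,
      {c : K | m ∣ g.map (evalRingHom c)}).Finite := by
    refine Set.Finite.biUnion (Finset.finite_toSet _) fun m hm => ?_
    rw [Finset.mem_coe, Multiset.mem_toFinset] at hm
    have hirr := UniqueFactorizationMonoid.irreducible_of_normalized_factor m hm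
    refine finite_setOf_dvd_map_eval ?_ (hg m hirr)
    rw [← UniqueFactorizationMonoid.normalize_normalized_factor m hm]
    exact monic_normalize hirr.ne_zero
  obtain ⟨c, hc⟩ := hfin.exists_notMem
  refine ⟨c, isCoprime_of_irreducible_dvd (fun h => hα h.1) fun z hz hzα hzg => hc ?_⟩
  obtain ⟨q, hq, hzq⟩ := UniqueFactorizationMonoid.exists_mem_normalizedFactors_of_dvd hα hz hzα
  simp only [Set.mem_iUnion]
  exact ⟨q, Multiset.mem_toFinset.2 hq, hzq.symm.dvd.trans hzg⟩

end Coprime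

theorem exists_depth_parent_s9 {V : Type*} {r : V → V → Prop} {x : V}
    (h : ∀ y, Relation.ReflTransGen r x y) :
    ∃ (depth : V → ℕ) (parent : V → V),
      ∀ y, y ≠ x → r (parent y) y ∧ depth (parent y) < depth y := by
  let reach : ℕ → V → Prop := fun k => Nat.rec (fun y => y = x) (fun _ P y => ∃ a, P a ∧ r a y) k
  have hreach : ∀ y, ∃ k, reach k y := fun y => by
    induction h y with
    | refl => exact ⟨0, rfl⟩
    | tail _ hbc ih => exact ih.elim fun k hk => ⟨k + 1, _, hk, hbc⟩
  have hmin : ∀ y, ∃ d, reach d y ∧ ∀ k, reach k y → d ≤ k := fun y =>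
    ⟨sInf {k | reach k y}, Nat.sInf_mem (hreach y), fun _ hk => Nat.sInf_le hk⟩
  choose depth hdepth hdepth_le using hmin
  have hpar : ∀ y, ∃ a, y ≠ x → r a y ∧ depth a < depth y := fun y => by
    by_cases hy : y = x
    · exact ⟨y, fun hne => (hne hy).elim⟩
    · have hs := hdepth y
      generalize depth y = d at hs ⊢
      rcases d with _ | d
      · exact (hy hs).elim
      · obtain ⟨a, ha, hay⟩ := hs
        exact ⟨a, fun _ => ⟨hay, (hdepth_le a d ha).trans_lt d.lt_succ_self⟩⟩
  choose parent hparent using hpar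
  exact ⟨depth, parent, hparent⟩

theorem exists_perm_lt_of_lt {N : ℕ} (f : Fin N → ℕ) :
    ∃ e : Equiv.Perm (Fin N), ∀ i j, f i < f j → e j < e i := by
  refine ⟨(Tuple.sort f).symm.trans Fin.revPerm, fun i j hij => ?_⟩
  refine Fin.rev_lt_rev.2 (lt_of_not_ge fun hle => hij.not_ge ?_)
  simpa using Tuple.monotone_sort f hle

section Laplacian
variable {R : Type*} [CommRing R] {N : ℕ} {E : Finset (Fin N × Fin N)}

theorem lapMat_mulVec_one (w : Fin N × Fin N → R) : lapMat E w *ᵥ 1 = 0 := by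
  ext1 i
  simp only [Matrix.mulVec, dotProduct_one, Pi.zero_apply]
  rw [← Finset.add_sum_erase _ _ (Finset.mem_univ i)]
  have h : ∑ j ∈ Finset.univ.erase i, lapMat E w i j =
      ∑ j ∈ Finset.univ.erase i, if (j, i) ∈ E then -w (j, i) else 0 :=
    Finset.sum_congr rfl fun j hj => by simp [lapMat, (Finset.ne_of_mem_erase hj).symm]
  have hfilter : Finset.univ.filter (fun k => k ≠ i ∧ (k, i) ∈ E) =
      (Finset.univ.erase i).filter fun k => (k, i) ∈ E := by
    ext; simp
  rw [h, ← Finset.sum_filter, ← hfilter]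
  simp [lapMat]

theorem lapMat_congr {w w' : Fin N × Fin N → R} (h : ∀ e ∈ E, w e = w' e) :
    lapMat E w = lapMat E w' := by
  ext i j
  simp only [lapMat, Matrix.of_apply]
  split_ifs with _ hji
  · exact Finset.sum_congr rfl fun k hk => h _ (Finset.mem_filter.1 hk).2.2
  · rw [h _ hji]
  · rfl

theorem lapMat_map {S : Type*} [CommRing S] (f : R →+* S) (w : Fin N × Fin N → R) :
    (lapMat E w).map f = lapMat E (f ∘ w) := by
  ext i j
  simp only [lapMat, Matrix.of_apply, Matrix.map_apply]
  split_ifs <;> simp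

/-- With all weights off a spanning tree set to zero and those on the tree equal to `c`,
the Laplacian is triangular with a single zero and otherwise `c` on the diagonal. -/
theorem exists_lapMat_blockTriangular {i0 : Fin N}
    (h : ∀ j, Relation.ReflTransGen (fun a b => (a, b) ∈ E) i0 j) (c : R) :
    ∃ (w : Fin N × Fin N → R) (e : Equiv.Perm (Fin N)), (lapMat E w).BlockTriangular e ∧
      ∀ i, lapMat E w i i = if i = i0 then 0 else c := by
  obtain ⟨depth, parent, hp⟩ := exists_depth_parent_s9 h
  obtain ⟨e, he⟩ := exists_perm_lt_of_lt depth
  refine ⟨fun a => if a.2 ≠ i0 ∧ a.1 = parent a.2 then c else 0, e, fun i j hij => ?_, fun i => ?_⟩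
  · have hne : i ≠ j := by rintro rfl; exact lt_irrefl _ hij
    have hnot : ¬ (i ≠ i0 ∧ j = parent i) := by
      rintro ⟨hi, rfl⟩
      exact hij.not_gt (he _ _ (hp i hi).2)
    simp only [lapMat, Matrix.of_apply, if_neg hne, if_neg hnot, neg_zero, ite_self]
  · simp only [lapMat, Matrix.of_apply, if_true]
    split_ifs with hi
    · exact Finset.sum_eq_zero fun k _ => by simp [hi]
    · rw [Finset.sum_eq_single_of_mem (parent i)]
      · simp [hi]
      · have hlt := hp i hi
        simp only [Finset.mem_filter, Finset.mem_univ, true_and]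
        exact ⟨fun heq => by rw [heq] at hlt; exact lt_irrefl _ hlt.2, hlt.1⟩
      · intro k _ hk
        simp [hk]

end Laplacian

open Polynomial in
/-- Lemma 5 of the paper. Suppose `G_sys` has a spanning tree, and let `d₀` be
the maximal degree of a real polynomial `α₀(s)` dividing `det(sI - A + t·BC)` in `ℝ[t][s]`.
Then the maximal degree of a real polynomial `α(s)` dividing `det(sI - A_sys(p))` in `ℝ[p][s]`
(where `p` is a family of independent indeterminates, one per edge, and
`A_sys(p) = I_N ⊗ A - L(p) ⊗ BC`) equals `n + (N - 1)·d₀`. -/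
theorem stmt9 {n r N : ℕ}
    (A : Matrix (Fin n) (Fin n) ℝ) (B : Matrix (Fin n) (Fin r) ℝ) (C : Matrix (Fin r) (Fin n) ℝ)
    (E : Finset (Fin N × Fin N)) (hE : ∀ e ∈ E, e.1 ≠ e.2)
    (hspan : ∃ i0 : Fin N, ∀ j : Fin N, Relation.ReflTransGen (fun a b => (a, b) ∈ E) i0 j)
    (d0 : ℕ)
    (hd0 : IsGreatest
      {d : ℕ | ∃ α : Polynomial ℝ, α ≠ 0 ∧ α.natDegree = d ∧
        Polynomial.map (Polynomial.C : ℝ →+* Polynomial ℝ) α ∣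
          Matrix.charpoly
            ((A.map fun a => Polynomial.C a)
              - (Polynomial.X : Polynomial ℝ) • ((B * C).map fun a => Polynomial.C a))} d0) :
    IsGreatest
      {d : ℕ | ∃ α : Polynomial ℝ, α ≠ 0 ∧ α.natDegree = d ∧
        Polynomial.map (MvPolynomial.C : ℝ →+* MvPolynomial (↥E) ℝ) α ∣
          Matrix.charpoly
            ((1 : Matrix (Fin N) (Fin N) (MvPolynomial (↥E) ℝ)) ⊗ₖ (A.map fun a => MvPolynomial.C a)
              - lapMat E (fun e => if h : e ∈ E then MvPolynomial.X (⟨e, h⟩ : ↥E) else 0)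
                  ⊗ₖ ((B * C).map fun a => MvPolynomial.C a))}
      (n + (N - 1) * d0) := by
  generalize B * C = Q at hd0 ⊢
  obtain ⟨i0, hi0⟩ := hspan
  obtain ⟨⟨α₀, hα₀, hdeg₀, hdvd₀⟩, hmax⟩ := hd0
  constructor
  · refine ⟨A.charpoly * α₀ ^ (N - 1),
      mul_ne_zero A.charpoly_monic.ne_zero (pow_ne_zero _ hα₀), ?_, ?_⟩
    · rw [natDegree_mul A.charpoly_monic.ne_zero (pow_ne_zero _ hα₀), natDegree_pow, hdeg₀,
        Matrix.charpoly_natDegree_eq_dim, Fintype.card_fin]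
    · have : Nonempty (Fin N) := ⟨i0⟩
      simpa using charpoly_mul_pow_dvd (MvPolynomial.C : ℝ →+* MvPolynomial (↥E) ℝ) A Q
        (lapMat_mulVec_one _) hdvd₀
  · rintro d ⟨α, hα, rfl, hdvd⟩
    obtain ⟨g, hg⟩ := hdvd₀
    obtain ⟨c, hc⟩ := exists_isCoprime_map_eval hα (g := g) fun m hm ⟨q, hq⟩ => by
      have hle := hmax ⟨α₀ * m, mul_ne_zero hα₀ hm.ne_zero, rfl, q, by
        rw [hg, hq, Polynomial.map_mul, mul_assoc]⟩
      rw [natDegree_mul hα₀ hm.ne_zero, hdeg₀] at hle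
      have := hm.natDegree_pos
      omega
    obtain ⟨w, e, hw, hdiag⟩ := exists_lapMat_blockTriangular hi0 c
    have hα_dvd : α ∣ ((1 : Matrix (Fin N) (Fin N) ℝ) ⊗ₖ A - lapMat E w ⊗ₖ Q).charpoly := by
      have h := Polynomial.map_dvd (MvPolynomial.eval fun a : ↥E => w a) hdvd
      rw [← Matrix.charpoly_map, Polynomial.map_map,
        show (MvPolynomial.eval fun a : ↥E => w a).comp MvPolynomial.C = RingHom.id ℝ by ext; simp,
        Polynomial.map_id] at h
      convert h using 2
      have hlap : lapMat E w = (lapMat E fun e => if h : e ∈ E then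
          MvPolynomial.X (⟨e, h⟩ : ↥E) else 0).map (MvPolynomial.eval fun a : ↥E => w a) := by
        rw [lapMat_map]
        exact lapMat_congr fun a ha => by simp [ha]
      rw [hlap]
      ext ⟨i, k⟩ ⟨j, l⟩
      simp [Matrix.one_apply, apply_ite]
    have hc_charpoly : (A - c • Q).charpoly = α₀ * g.map (evalRingHom c) := by
      have h := congrArg (Polynomial.map (evalRingHom c)) hg
      rw [← Matrix.charpoly_map, Polynomial.map_mul, Polynomial.map_map,
        show (evalRingHom c).comp Polynomial.C = RingHom.id ℝ by ext; simp,
        Polynomial.map_id] at h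
      convert h using 2
      ext
      simp [mul_comm c]
    have hprod : ∏ i, (A - lapMat E w i i • Q).charpoly =
        A.charpoly * (α₀ * g.map (evalRingHom c)) ^ (N - 1) := by
      rw [← Finset.mul_prod_erase _ _ (Finset.mem_univ i0), hdiag, if_pos rfl, zero_smul, sub_zero]
      congr 1
      rw [Finset.prod_congr rfl fun i hi => by
        rw [hdiag, if_neg (Finset.ne_of_mem_erase hi), hc_charpoly], Finset.prod_const]
      simp
    rw [charpoly_one_kronecker_sub_kronecker_of_blockTriangular e hw, hprod, mul_pow,
      ← mul_assoc] at hα_dvd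
    have hle := natDegree_le_of_dvd (hc.pow_right.dvd_of_dvd_mul_right hα_dvd)
      (mul_ne_zero A.charpoly_monic.ne_zero (pow_ne_zero _ hα₀))
    rwa [natDegree_mul A.charpoly_monic.ne_zero (pow_ne_zero _ hα₀), natDegree_pow, hdeg₀,
      Matrix.charpoly_natDegree_eq_dim, Fintype.card_fin] at hle
end
end

section
/- Let H ∈ ℝ^{k×n}, P ∈ ℝ^{k×m}, and G ∈ ℝ^{n×k} satisfy the no-cancellation conditions: for all i, j, if there exists l with G_{il} ≠ 0 and H_{lj} ≠ 0 then (GH)_{ij} ≠ 0, and for all i, j, if there exists l with G_{il} ≠ 0 and P_{lj} ≠ 0 then (GP)_{ij} ≠ 0. Define a digraph D₁ with vertex set {v₁,…,v_n} ∪ {z₁,…,z_m} and edges v_i → v_j iff (GH)_{ji} ≠ 0 and z_i → v_j iff (GP)_{ji} ≠ 0. Define a digraph D₂ with vertex set {v′₁,…,v′_k} ∪ {z₁,…,z_m} and edges v′_i → v′_j iff there exists l with H_{jl} ≠ 0 and G_{li} ≠ 0 (this is the generic zero–nonzero pattern of HΛG for a diagonal matrix Λ with free diagonal parameters), and z_i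 → v′_j iff P_{ji} ≠ 0. Then every cycle of D₁ is input-reachable if and only if every cycle of D₂ is input-reachable. -/
open Matrix
open scoped Kronecker

noncomputable section

section RelationComp

open Relation

variable {α β : Type*} {h : α → β → Prop} {g : β → α → Prop}

/-- A walk for `Comp h g`, entered by a `g`-edge and left by an `h`-edge, is a nonempty walk for
`Comp g h`. -/
theorem transGen_comp_swap {a a' : α} {b b' : β} (hb : g b a)
    (ha : ReflTransGen (Comp h g) a a') (hb' : h a' b') : TransGen (Comp g h) b b' := by
  induction ha generalizing b' with
  | refl => exact .single ⟨_, hb, hb'⟩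
  | tail _ hstep ih =>
    obtain ⟨c, hc, hc'⟩ := hstep
    exact (ih hc).tail ⟨_, hc', hb'⟩

/-- A walk for `Comp g h` left by a `g`-edge is a `g`-edge followed by a walk for `Comp h g`. -/
theorem exists_reflTransGen_comp_swap {b b' : β} {a' : α}
    (hb : ReflTransGen (Comp g h) b b') (ha' : g b' a') :
    ∃ a, g b a ∧ ReflTransGen (Comp h g) a a' := by
  induction hb using ReflTransGen.head_induction_on with
  | refl => exact ⟨a', ha', .refl⟩
  | head hstep _ ih =>
    obtain ⟨a, hga, hha⟩ := hstep
    obtain ⟨c, hgc, hc⟩ := ih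
    exact ⟨a, hga, hc.head ⟨_, hha, hgc⟩⟩

/-- A vertex on a cycle for `Comp h g` is entered by a `g`-edge from a vertex on a cycle for
`Comp g h`. -/
theorem exists_cycle_comp_swap {a : α} (ha : TransGen (Comp h g) a a) :
    ∃ b, g b a ∧ TransGen (Comp g h) b b := by
  obtain ⟨c, hac, b, hcb, hba⟩ := TransGen.tail'_iff.1 ha
  exact ⟨b, hba, transGen_comp_swap hba hac hcb⟩

/-- All cycles for `Comp h g` are reachable from the inputs `Comp p g` iff all cycles for
`Comp g h` are reachable from the inputs `p`. -/
theorem cycles_reachable_comp_swap_iff {γ : Type*} {p : γ → β → Prop} :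
    (∀ v, TransGen (Comp h g) v v → ∃ z a, Comp p g z a ∧ ReflTransGen (Comp h g) a v) ↔
      ∀ v, TransGen (Comp g h) v v → ∃ z b, p z b ∧ ReflTransGen (Comp g h) b v := by
  constructor
  · intro hr v hv
    obtain ⟨a, hav, ha⟩ := exists_cycle_comp_swap hv
    obtain ⟨z, a', ⟨b, hzb, hba'⟩, ha'⟩ := hr a ha
    exact ⟨z, b, hzb, (transGen_comp_swap hba' ha' hav).to_reflTransGen⟩
  · intro hr v hv
    obtain ⟨b, hbv, hb⟩ := exists_cycle_comp_swap hv
    obtain ⟨z, b', hzb', hb'⟩ := hr b hb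
    obtain ⟨a, hba, ha⟩ := exists_reflTransGen_comp_swap hb' hbv
    exact ⟨z, a, ⟨b', hzb', hba⟩, ha⟩

end RelationComp

/-- A nonzero entry of a matrix product has a nonzero term. -/
theorem exists_ne_zero_of_mul_apply_ne_zero {R ι κ μ : Type*} [NonUnitalNonAssocSemiring R]
    [Fintype κ] {A : Matrix ι κ R} {B : Matrix κ μ R} {i : ι} {j : μ} (hij : (A * B) i j ≠ 0) :
    ∃ l, A i l ≠ 0 ∧ B l j ≠ 0 := by
  rw [Matrix.mul_apply] at hij
  obtain ⟨l, -, hl⟩ := Finset.exists_ne_zero_of_sum_ne_zero hij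
  exact ⟨l, left_ne_zero_of_mul hl, right_ne_zero_of_mul hl⟩

/-- Lemma 4 of the paper. Under the no-cancellation conditions on `G`, `H`,
`P`, every cycle of the auxiliary graph of `(GH, GP)` is input-reachable iff every cycle of the
auxiliary graph of `(HΛG, P)` (for generic diagonal `Λ`) is input-reachable. A vertex lies on a
cycle iff it can reach itself by a nonempty directed walk, and a cycle is input-reachable iff
every vertex of it is. -/
theorem stmt10 {k n m : ℕ}
    (H : Matrix (Fin k) (Fin n) ℝ) (P : Matrix (Fin k) (Fin m) ℝ) (G : Matrix (Fin n) (Fin k) ℝ)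
    (hGH : ∀ (i : Fin n) (j : Fin n), (∃ l : Fin k, G i l ≠ 0 ∧ H l j ≠ 0) → (G * H) i j ≠ 0)
    (hGP : ∀ (i : Fin n) (j : Fin m), (∃ l : Fin k, G i l ≠ 0 ∧ P l j ≠ 0) → (G * P) i j ≠ 0) :
    ((∀ v : Fin n, Relation.TransGen (fun a b : Fin n => (G * H) b a ≠ 0) v v →
        ∃ (z : Fin m) (a : Fin n), (G * P) a z ≠ 0 ∧
          Relation.ReflTransGen (fun a b : Fin n => (G * H) b a ≠ 0) a v) ↔
      (∀ v : Fin k, Relation.TransGen (fun a b : Fin k => ∃ l : Fin n, H b l ≠ 0 ∧ G l a ≠ 0) v v →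
        ∃ (z : Fin m) (a : Fin k), P a z ≠ 0 ∧
          Relation.ReflTransGen
            (fun a b : Fin k => ∃ l : Fin n, H b l ≠ 0 ∧ G l a ≠ 0) a v)) := by
  have hGH' : (fun a b : Fin n => (G * H) b a ≠ 0) =
      Relation.Comp (fun a l => H l a ≠ 0) (fun l b => G b l ≠ 0) := by
    ext a b
    exact ⟨fun hab => (exists_ne_zero_of_mul_apply_ne_zero hab).imp fun _ => And.symm,
      fun hab => hGH b a (hab.imp fun _ => And.symm)⟩
  have hGP' : ∀ z a, (G * P) a z ≠ 0 ↔
      Relation.Comp (fun z l => P l z ≠ 0) (fun l b => G b l ≠ 0) z a := fun z a =>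
    ⟨fun hza => (exists_ne_zero_of_mul_apply_ne_zero hza).imp fun _ => And.symm,
      fun hza => hGP a z (hza.imp fun _ => And.symm)⟩
  have hHG : (fun a b : Fin k => ∃ l : Fin n, H b l ≠ 0 ∧ G l a ≠ 0) =
      Relation.Comp (fun l b => G b l ≠ 0) (fun a l => H l a ≠ 0) := by
    ext a b
    exact exists_congr fun _ => and_comm
  simp only [hGH', hGP', hHG]
  exact cycles_reachable_comp_swap_iff
end
end

section
/- Consider a differently weighted MIMO networked relative coupling system with A ∈ ℝ^{n×n}, B = [b₁,…,b_r] ∈ ℝ^{n×r}, C ∈ ℝ^{r×n} with rows c₁,…,c_r, digraph G_sys on {1,…,N} without self-loops, and driving set I_u. If there exist weight vectors w^{(1)},…,w^{(r)} ∈ ℝ^{|E|} such that (A_sys(w^{(1)},…,w^{(r)}), B_sys) is controllable, then the set of tuples (w^{(1)},…,w^{(r)}) ∈ ℝ^{r·|E|} for which (A_sys(w^{(1)},…,w^{(r)}), B_sys) is not controllable has Lebesgue measure zero. In other words, structural controllability implies that the corresponding numerical systems are controllable for almost all values of the interaction weights. -/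
open Matrix
open scoped Kronecker

noncomputable section

/-- The rank-one matrix `b_k c_k` formed by the `k`-th column of `B` and the `k`-th row of `C`. -/
def colRow {n r : ℕ} (B : Matrix (Fin n) (Fin r) ℝ) (C : Matrix (Fin r) (Fin n) ℝ) (k : Fin r) :
    Matrix (Fin n) (Fin n) ℝ :=
  Matrix.of fun i j => B i k * C k j

/-- Lumped state matrix of the differently weighted MIMO NRCS:
`A_sys = I_N ⊗ A - ∑ₖ L(w⁽ᵏ⁾) ⊗ (b_k c_k)`. -/
def asysD {n r N : ℕ} (A : Matrix (Fin n) (Fin n) ℝ) (B : Matrix (Fin n) (Fin r) ℝ)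
    (C : Matrix (Fin r) (Fin n) ℝ) (E : Finset (Fin N × Fin N))
    (ws : Fin r → Fin N × Fin N → ℝ) : Matrix (Fin N × Fin n) (Fin N × Fin n) ℝ :=
  (1 : Matrix (Fin N) (Fin N) ℝ) ⊗ₖ A - ∑ k : Fin r, lapMat E (ws k) ⊗ₖ colRow B C k

/-- Extend a tuple of edge weights, indexed by `Fin r × ↥E` (i.e. a point of `ℝ^{r·|E|}`),
to `r` weight functions on all vertex pairs, vanishing off `E`. -/
def extW {N r : ℕ} (E : Finset (Fin N × Fin N)) (ws : Fin r × ↥E → ℝ) (k : Fin r) :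
    Fin N × Fin N → ℝ :=
  fun e => if h : e ∈ E then ws (k, ⟨e, h⟩) else 0

/-- The zero set of a real analytic function on a finite-dimensional real space that is not
identically zero is null for every Haar measure. -/
theorem measure_zeroSet_of_analyticAt {V : Type*} [NormedAddCommGroup V] [NormedSpace ℝ V]
    [FiniteDimensional ℝ V] [MeasurableSpace V] [BorelSpace V] (μ : MeasureTheory.Measure V)
    [μ.IsAddHaarMeasure] {f : V → ℝ} (hf : ∀ x, AnalyticAt ℝ f x) {x₀ : V} (hx₀ : f x₀ ≠ 0) :
    μ {x | f x = 0} = 0 := by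
  have hcont : Continuous f := continuous_iff_continuousAt.2 fun x => (hf x).continuousAt
  have hline : ∀ x : V, ∀ᵐ t : ℝ, f (x₀ + t • x) ≠ 0 := by
    intro x
    have han : AnalyticOnNhd ℝ (fun t : ℝ => f (x₀ + t • x)) Set.univ := fun t _ =>
      (hf _).comp_of_eq (f := fun t : ℝ => x₀ + t • x) (by fun_prop) rfl
    have hcod := han.preimage_zero_mem_codiscrete (x := 0) (by simpa using hx₀)
    have hae := ae_restrict_le_codiscreteWithin (μ := MeasureTheory.volume)
      MeasurableSet.univ hcod
    rw [MeasureTheory.Measure.restrict_univ] at hae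
    exact hae
  have hmeas : MeasurableSet {p : V × ℝ | f (x₀ + p.2 • p.1) ≠ 0} :=
    (isOpen_ne_fun (by fun_prop) continuous_const).measurableSet
  have hswap : ∀ᵐ t : ℝ, ∀ᵐ x ∂μ, f (x₀ + t • x) ≠ 0 :=
    (MeasureTheory.Measure.ae_ae_comm hmeas).1 (.of_forall hline)
  obtain ⟨t, ht, ht₀⟩ :=
    (hswap.and (MeasureTheory.Measure.ae_ne MeasureTheory.volume (0 : ℝ))).exists
  have hscaled : μ ((t • ·) ⁻¹' ((x₀ + ·) ⁻¹' {x | f x = 0})) = 0 := by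
    simpa [MeasureTheory.ae_iff] using ht
  rw [MeasureTheory.Measure.addHaar_preimage_smul μ ht₀, MeasureTheory.measure_preimage_add]
    at hscaled
  simpa [ht₀] using hscaled

/-- A real matrix has full row rank iff its Gram determinant does not vanish. -/
theorem Matrix.rank_eq_card_iff_det_mul_transpose_ne_zero {ι κ : Type*} [Fintype ι] [Fintype κ]
    [DecidableEq ι] (K : Matrix ι κ ℝ) : K.rank = Fintype.card ι ↔ (K * Kᵀ).det ≠ 0 := by
  rw [← Matrix.rank_self_mul_transpose]
  refine ⟨fun h => ?_, Matrix.rank_of_det_ne_zero⟩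
  have hrange : LinearMap.range (K * Kᵀ).mulVecLin = ⊤ :=
    Submodule.eq_top_of_finrank_eq (by simpa [Matrix.rank] using h)
  have hunit : IsUnit (K * Kᵀ) :=
    Matrix.mulVec_surjective_iff_isUnit.1 (LinearMap.range_eq_top.1 hrange)
  exact ((Matrix.isUnit_iff_isUnit_det _).1 hunit).ne_zero

section AnalyticEntries

variable {V : Type*} [NormedAddCommGroup V] [NormedSpace ℝ V]

theorem analyticAt_matrix_mul_apply {ι κ τ : Type*} [Fintype κ] {M : V → Matrix ι κ ℝ}
    {Q : V → Matrix κ τ ℝ} {x : V} (hM : ∀ i j, AnalyticAt ℝ (fun v => M v i j) x)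
    (hQ : ∀ i j, AnalyticAt ℝ (fun v => Q v i j) x) (i : ι) (j : τ) :
    AnalyticAt ℝ (fun v => (M v * Q v) i j) x := by
  simp only [Matrix.mul_apply]
  exact Finset.analyticAt_fun_sum _ fun k _ => (hM i k).mul (hQ k j)

theorem analyticAt_matrix_pow_apply {ι : Type*} [Fintype ι] [DecidableEq ι]
    {M : V → Matrix ι ι ℝ} {x : V} (hM : ∀ i j, AnalyticAt ℝ (fun v => M v i j) x) (m : ℕ) :
    ∀ i j, AnalyticAt ℝ (fun v => (M v ^ m) i j) x := by
  induction m with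
  | zero => intro i j; simpa using analyticAt_const
  | succ m ih =>
    simp only [pow_succ]
    exact analyticAt_matrix_mul_apply ih hM

theorem analyticAt_matrix_det {ι : Type*} [Fintype ι] [DecidableEq ι]
    {M : V → Matrix ι ι ℝ} {x : V} (hM : ∀ i j, AnalyticAt ℝ (fun v => M v i j) x) :
    AnalyticAt ℝ (fun v => (M v).det) x := by
  simp only [Matrix.det_apply']
  exact Finset.analyticAt_fun_sum _ fun σ _ =>
    analyticAt_const.mul (Finset.analyticAt_fun_prod _ fun i _ => hM _ _)

/-- If the pair `(M v, Q)` depends analytically on `v` and is controllable for one value of `v`,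
then it is controllable for almost every value. -/
theorem measure_not_isCtrb_of_analyticAt [FiniteDimensional ℝ V] [MeasurableSpace V]
    [BorelSpace V] (μ : MeasureTheory.Measure V) [μ.IsAddHaarMeasure] {ι κ : Type*} [Fintype ι]
    [Fintype κ] [DecidableEq ι] {M : V → Matrix ι ι ℝ} (Q : Matrix ι κ ℝ)
    (hM : ∀ x i j, AnalyticAt ℝ (fun v => M v i j) x) (h : ∃ v, IsCtrb (M v) Q) :
    μ {v | ¬ IsCtrb (M v) Q} = 0 := by
  obtain ⟨v₀, hv₀⟩ := h
  simp only [IsCtrb, Matrix.rank_eq_card_iff_det_mul_transpose_ne_zero, not_not] at hv₀ ⊢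
  have hK (x : V) (i : ι) (jk : Fin (Fintype.card ι) × κ) :
      AnalyticAt ℝ (fun v => (M v ^ (jk.1 : ℕ) * Q) i jk.2) x :=
    analyticAt_matrix_mul_apply (Q := fun _ => Q) (analyticAt_matrix_pow_apply (hM x) _)
      (fun _ _ => analyticAt_const) i jk.2
  exact measure_zeroSet_of_analyticAt μ (fun x => analyticAt_matrix_det
    (analyticAt_matrix_mul_apply (hK x) fun jk i => hK x i jk)) hv₀

end AnalyticEntries

theorem analyticAt_extW {N r : ℕ} (E : Finset (Fin N × Fin N)) (k : Fin r) (e : Fin N × Fin N)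
    (x : Fin r × ↥E → ℝ) : AnalyticAt ℝ (fun ws => extW E ws k e) x := by
  unfold extW
  split_ifs with he
  · exact (ContinuousLinearMap.proj (R := ℝ) (φ := fun _ : Fin r × ↥E => ℝ)
      (k, ⟨e, he⟩)).analyticAt x
  · exact analyticAt_const

theorem analyticAt_asysD_apply {n r N : ℕ} (A : Matrix (Fin n) (Fin n) ℝ)
    (B : Matrix (Fin n) (Fin r) ℝ) (C : Matrix (Fin r) (Fin n) ℝ) (E : Finset (Fin N × Fin N))
    (x : Fin r × ↥E → ℝ) (i j : Fin N × Fin n) :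
    AnalyticAt ℝ (fun ws => asysD A B C E (extW E ws) i j) x := by
  simp only [asysD, Matrix.sub_apply, Matrix.sum_apply, Matrix.kroneckerMap_apply]
  refine analyticAt_const.sub (Finset.analyticAt_fun_sum _ fun k _ =>
    AnalyticAt.mul ?_ analyticAt_const)
  simp only [lapMat, Matrix.of_apply]
  split_ifs
  · exact Finset.analyticAt_fun_sum _ fun l _ => analyticAt_extW E k _ x
  · exact (analyticAt_extW E k _ x).neg
  · exact analyticAt_const

/-- If the differently weighted MIMO NRCS is structurally controllable, then
the set of weight tuples in `ℝ^{r·|E|}` rendering the lumped pair uncontrollable has Lebesgue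
measure zero. -/
theorem stmt11 {n r N : ℕ}
    (A : Matrix (Fin n) (Fin n) ℝ) (B : Matrix (Fin n) (Fin r) ℝ) (C : Matrix (Fin r) (Fin n) ℝ)
    (E : Finset (Fin N × Fin N)) (hE : ∀ e ∈ E, e.1 ≠ e.2)
    (Iu : Finset (Fin N))
    (h : ∃ ws : Fin r × ↥E → ℝ,
      IsCtrb (asysD A B C E (extW E ws)) ((deltaMat Iu : Matrix (Fin N) {i // i ∈ Iu} ℝ) ⊗ₖ B)) :
    MeasureTheory.volume
      {ws : Fin r × ↥E → ℝ |
        ¬ IsCtrb (asysD A B C E (extW E ws))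
            ((deltaMat Iu : Matrix (Fin N) {i // i ∈ Iu} ℝ) ⊗ₖ B)} = 0 := by
  exact measure_not_isCtrb_of_analyticAt _ _ (analyticAt_asysD_apply A B C E) h
end
end

section
/- Let A ∈ ℂ^{n×n}, B ∈ ℂ^{n×r}, C ∈ ℂ^{r×n}, and L ∈ ℂ^{N×N}, and let λ₁,…,λ_N be the eigenvalues of L listed with algebraic multiplicity (the roots of the characteristic polynomial of L). Then the characteristic polynomial of I_N ⊗ A − L ⊗ (BC) factors as det(s·I_{nN} − I_N ⊗ A + L ⊗ (BC)) = ∏_{i=1}^{N} det(s·I_n − A + λ_i·BC) in ℂ[s]. -/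
open Matrix
open scoped Kronecker

noncomputable section

open Polynomial in
/-- The determinant of a polynomial in `M` is the product of its values at the eigenvalues. -/
theorem Matrix.det_aeval_eq_prod_roots_charpoly {K m : Type*} [Field K] [IsAlgClosed K]
    [Fintype m] [DecidableEq m] (M : Matrix m m K) (p : K[X]) :
    (aeval M p).det = (M.charpoly.roots.map fun μ => p.eval μ).prod := by
  have hM : M.charpoly.Splits := IsAlgClosed.splits _
  have hcard : M.charpoly.roots.card = Fintype.card m := by
    rw [← hM.natDegree_eq_card_roots, M.charpoly_natDegree_eq_dim]
  have hp : p.Splits := IsAlgClosed.splits p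
  refine Submonoid.closure_induction ?_ ?_ ?_ hp
  · rintro q (⟨c, rfl⟩ | ⟨c, rfl⟩)
    · simp [hcard, Algebra.algebraMap_eq_smul_one]
    · have hneg : aeval M (X + C c) = -(scalar m (-c) - M) := by
        rw [map_neg, neg_sub, sub_neg_eq_add, map_add, aeval_X, aeval_C]
        rfl
      rw [hneg, det_neg, ← eval_charpoly, hM.eval_eq_prod_roots_of_monic M.charpoly_monic,
        ← hcard, ← Multiset.card_map (fun μ => -c - μ), ← Multiset.prod_map_neg, Multiset.map_map]
      simp [add_comm]
  · simp
  · intro q₁ q₂ _ _ h₁ h₂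
    simp [h₁, h₂, Multiset.prod_map_mul]

open Polynomial in
/-- The determinant of the evaluation at `M` of a linear matrix pencil `P + X • Q`. -/
theorem Matrix.det_one_kronecker_add_kronecker {K m n : Type*} [Field K] [IsAlgClosed K]
    [Fintype m] [DecidableEq m] [Fintype n] [DecidableEq n]
    (M : Matrix m m K) (P Q : Matrix n n K) :
    ((1 : Matrix m m K) ⊗ₖ P + M ⊗ₖ Q).det =
      (M.charpoly.roots.map fun μ => (P + μ • Q).det).prod := by
  let pencil : Matrix n n K[X] := P.map C + (X : K[X]) • Q.map C
  have heval (μ : K) : pencil.det.eval μ = (P + μ • Q).det := by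
    rw [← coe_evalRingHom, RingHom.map_det]
    congr 1
    ext i j
    simp [pencil, mul_comm μ]
  have hcomp : (pencil.map (aeval M).toRingHom).comp n n m m K =
      ((1 : Matrix m m K) ⊗ₖ P + M ⊗ₖ Q).submatrix (Equiv.prodComm n m) (Equiv.prodComm n m) := by
    ext ⟨i, k⟩ ⟨j, l⟩
    simp [pencil, Matrix.comp_apply, Matrix.one_apply,
      Algebra.algebraMap_eq_smul_one, mul_comm (M k l)]
  have hdet := det_det pencil (aeval M).toRingHom
  rw [hcomp, det_submatrix_equiv_self] at hdet
  simp_rw [← heval, ← det_aeval_eq_prod_roots_charpoly]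
  exact hdet.symm

/-- Over `ℂ`, the characteristic polynomial of `I_N ⊗ A - L ⊗ (BC)` factors
as the product over the eigenvalues `μ` of `L` (listed with algebraic multiplicity, i.e. the
roots of the characteristic polynomial of `L`) of `det(s I_n - A + μ BC)`, i.e. of the
characteristic polynomials of `A - μ • BC`. -/
theorem stmt13 {n r N : ℕ}
    (A : Matrix (Fin n) (Fin n) ℂ) (B : Matrix (Fin n) (Fin r) ℂ) (C : Matrix (Fin r) (Fin n) ℂ)
    (L : Matrix (Fin N) (Fin N) ℂ) :
    Matrix.charpoly ((1 : Matrix (Fin N) (Fin N) ℂ) ⊗ₖ A - L ⊗ₖ (B * C)) =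
      ((Matrix.charpoly L).roots.map fun μ => Matrix.charpoly (A - μ • (B * C))).prod := by
  refine Polynomial.funext fun s => ?_
  rw [Polynomial.eval_multiset_prod, Multiset.map_map, eval_charpoly]
  have hsplit : scalar (Fin N × Fin n) s - ((1 : Matrix (Fin N) (Fin N) ℂ) ⊗ₖ A - L ⊗ₖ (B * C)) =
      (1 : Matrix (Fin N) (Fin N) ℂ) ⊗ₖ (scalar (Fin n) s - A) + L ⊗ₖ (B * C) := by
    have hscalar : scalar (Fin N × Fin n) s =
        (1 : Matrix (Fin N) (Fin N) ℂ) ⊗ₖ scalar (Fin n) s := by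
      rw [scalar_apply, scalar_apply, ← diagonal_one, diagonal_kronecker_diagonal]
      simp
    rw [hscalar, sub_eq_add_neg _ A, ← neg_one_smul ℂ A, kronecker_add, kronecker_smul]
    module
  rw [hsplit, det_one_kronecker_add_kronecker]
  simp only [Function.comp_apply, eval_charpoly, sub_add]
end
end

section
/- Consider a differently weighted MIMO networked relative coupling system with A ∈ ℝ^{n×n} (n ≥ 1), B = [b₁,…,b_r] ∈ ℝ^{n×r}, C ∈ ℝ^{r×n} with rows c₁,…,c_r, digraph G_sys on {1,…,N} without self-loops, and driving set I_u. If some vertex i ∈ {1,…,N} is not input-reachable, then for every choice of weight vectors w^{(1)},…,w^{(r)} ∈ ℝ^{|E|}, the pair (A_sys(w^{(1)},…,w^{(r)}), B_sys) is not controllable; in particular, the system is not structurally controllable. (Global input-reachability is thus necessary for structural controllability in all three interaction fashions.) -/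
open Matrix
open scoped Kronecker

noncomputable section

/-- A pair is not controllable if some state belongs to a set of states that receives neither
input nor influence from its complement. -/
theorem not_isCtrb_of_isolated {R : Type*} [Field R] {ι κ : Type*} [Fintype ι] [Fintype κ]
    [DecidableEq ι] (M : Matrix ι ι R) (Q : Matrix ι κ R) (S : Set ι)
    (hM : ∀ p ∈ S, ∀ q ∉ S, M p q = 0) (hQ : ∀ p ∈ S, ∀ k, Q p k = 0) {p : ι} (hp : p ∈ S) :
    ¬ IsCtrb M Q := by
  have hpow : ∀ m : ℕ, ∀ p ∈ S, ∀ k, (M ^ m * Q) p k = 0 := by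
    intro m
    induction m with
    | zero => simpa using hQ
    | succ m ih =>
      intro p hp k
      rw [pow_succ', Matrix.mul_assoc, Matrix.mul_apply]
      refine Finset.sum_eq_zero fun q _ => ?_
      by_cases hq : q ∈ S
      · rw [ih q hq k, mul_zero]
      · rw [hM p hp q hq, zero_mul]
  intro h
  unfold IsCtrb at h
  rw [Matrix.rank_eq_finrank_span_row] at h
  have hli := linearIndependent_iff_card_eq_finrank_span.2 h.symm
  exact hli.ne_zero p (funext fun jk => hpow _ p hp _)

/-- A non-input-reachable vertex receives no influence from an input-reachable one. -/
theorem lapMat_eq_zero_of_not_inputReachable {R : Type*} [CommRing R] {N : ℕ}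
    {E : Finset (Fin N × Fin N)} {Iu : Finset (Fin N)} (w : Fin N × Fin N → R) {i j : Fin N}
    (hi : ¬ inputReachable E Iu i) (hj : inputReachable E Iu j) : lapMat E w i j = 0 := by
  have hij : i ≠ j := fun h => hi (h ▸ hj)
  have hE : (j, i) ∉ E := fun he =>
    let ⟨s, hs, hsj⟩ := hj
    hi ⟨s, hs, hsj.tail he⟩
  simp [lapMat, hij, hE]

/-- If some vertex of the network is not input-reachable, then no choice of
weight vectors makes the differently weighted MIMO NRCS controllable; in particular the system
is not structurally controllable. -/
theorem stmt14 {n r N : ℕ} (hn : 1 ≤ n)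
    (A : Matrix (Fin n) (Fin n) ℝ) (B : Matrix (Fin n) (Fin r) ℝ) (C : Matrix (Fin r) (Fin n) ℝ)
    (E : Finset (Fin N × Fin N)) (hE : ∀ e ∈ E, e.1 ≠ e.2)
    (Iu : Finset (Fin N))
    (i : Fin N) (hi : ¬ inputReachable E Iu i) :
    ∀ ws : Fin r → Fin N × Fin N → ℝ,
      ¬ IsCtrb (asysD A B C E ws) ((deltaMat Iu : Matrix (Fin N) {i // i ∈ Iu} ℝ) ⊗ₖ B) := by
  intro ws
  refine not_isCtrb_of_isolated _ _ {p | ¬ inputReachable E Iu p.1} ?_ ?_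
    (p := (i, ⟨0, hn⟩)) hi
  · rintro ⟨a, x⟩ ha ⟨b, y⟩ hb
    have hb' : inputReachable E Iu b := not_not.1 hb
    have hab : a ≠ b := fun h => ha (h ▸ hb')
    simp [asysD, Matrix.sum_apply, Matrix.kroneckerMap_apply, hab,
      lapMat_eq_zero_of_not_inputReachable _ ha hb']
  · rintro ⟨a, x⟩ ha ⟨⟨b, hb⟩, y⟩
    have hab : a ≠ b := fun h => ha ⟨b, hb, h ▸ .refl⟩
    simp [deltaMat, Matrix.kroneckerMap_apply, hab]
end
end
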